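/- arXiv:1804.01589 — 3 statements merged into one kernel-verified Lean document; each statement's English description precedes it below -/
import Mathlib

section
/- Let F be an algebraically closed field and G an abelian group. Two finite-dimensional G-graded simple F-algebras (associative or not necessarily associative) satisfy the same G-graded polynomial identities if and only if they are isomorphic as G-graded algebras. -/
noncomputable section

variable (K : Type*) [Field K]
variable {G : Type*} [CommGroup G] [DecidableEq G]
variable {A : Type*} [NonUnitalNonAssocSemiring A] [Module K A]
  [SMulCommClass K A A] [IsScalarTower K A A]

/-- `𝒜` is a `G`-grading of the (not necessarily associative or unital) algebra `A`. -/
def IsAlgGrading (𝒜 : G → Submodule K A) : Prop :=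
  DirectSum.IsInternal 𝒜 ∧ ∀ (g h : G), ∀ a ∈ 𝒜 g, ∀ b ∈ 𝒜 h, a * b ∈ 𝒜 (g * h)

/-- A submodule is homogeneous if it is the sum of its intersections with the components. -/
def IsHomogSubmodule (𝒜 : G → Submodule K A) (I : Submodule K A) : Prop :=
  I = ⨆ g, I ⊓ 𝒜 g

/-- two-sided ideal of a nonassociative algebra -/
def IsMulIdeal (I : Submodule K A) : Prop :=
  ∀ a : A, ∀ x ∈ I, a * x ∈ I ∧ x * a ∈ I

/-- graded simple: `A·A ≠ 0` and no nontrivial homogeneous ideals. -/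
def IsGradedSimple (𝒜 : G → Submodule K A) : Prop :=
  (∃ a b : A, a * b ≠ 0) ∧
    ∀ I : Submodule K A, IsMulIdeal K I → IsHomogSubmodule K 𝒜 I → I = ⊥ ∨ I = ⊤

/-- The multiplication algebra: the subalgebra of `End_K A` generated by left and right
multiplications. -/
def MultAlg : NonUnitalSubalgebra K (Module.End K A) :=
  NonUnitalAlgebra.adjoin K
    (Set.range (LinearMap.mulLeft K (A := A)) ∪ Set.range (LinearMap.mulRight K (A := A)))

/-- The homogeneous component of degree `h` of `End_K A`: maps sending `𝒜 g` into `𝒜 (h*g)`. -/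
def endGrading (𝒜 : G → Submodule K A) (h : G) : Submodule K (Module.End K A) where
  carrier := {φ | ∀ g : G, ∀ x ∈ 𝒜 g, φ x ∈ 𝒜 (h * g)}
  add_mem' := fun hf hg g x hx => (𝒜 _).add_mem (hf g x hx) (hg g x hx)
  zero_mem' := fun g x hx => (𝒜 _).zero_mem
  smul_mem' := fun c f hf g x hx => (𝒜 _).smul_mem c (hf g x hx)

/-- The centroid of `A`: endomorphisms commuting with all left and right multiplications. -/
def centroid : Submodule K (Module.End K A) where
  carrier := {φ | ∀ a x : A, φ (a * x) = a * φ x ∧ φ (x * a) = φ x * a}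
  add_mem' := by
    intro f g hf hg a x
    refine ⟨?_, ?_⟩ <;>
      simp [LinearMap.add_apply, (hf a x).1, (hg a x).1, (hf a x).2, (hg a x).2, mul_add, add_mul]
  zero_mem' := by intro a x; simp
  smul_mem' := by
    intro c f hf a x
    refine ⟨?_, ?_⟩ <;>
      simp [LinearMap.smul_apply, (hf a x).1, (hf a x).2, mul_smul_comm, smul_mul_assoc]

/-- The graded centroid `Γ(A)`: the sums of homogeneous centroid elements. -/
def gradedCentroid (𝒜 : G → Submodule K A) : Submodule K (Module.End K A) :=
  ⨆ h : G, centroid K ⊓ endGrading K 𝒜 h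

/-- graded polynomial identity, variables indexed by `G × ℕ`, the variable `(g, i)` having
degree `g`. -/
def IsGradedPI (𝒜 : G → Submodule K A) (f : FreeNonUnitalNonAssocAlgebra K (G × ℕ)) : Prop :=
  ∀ v : G × ℕ → A, (∀ p, v p ∈ 𝒜 p.1) → FreeNonUnitalNonAssocAlgebra.lift K v f = 0

/-- ordinary polynomial identity of a not necessarily associative algebra -/
def IsPI (f : FreeNonUnitalNonAssocAlgebra K ℕ) : Prop :=
  ∀ v : ℕ → A, FreeNonUnitalNonAssocAlgebra.lift K v f = 0

/-- A subset `S` of an associative unital `K`-algebra `B` satisfies an ordinary polynomial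
identity. -/
def SatisfiesOrdinaryPI {B : Type*} [Ring B] [Algebra K B] (S : Set B) : Prop :=
  ∃ f : FreeAlgebra K ℕ, f ≠ 0 ∧
    ∀ v : ℕ → B, (∀ i, v i ∈ S) → FreeAlgebra.lift K v f = 0

/-- isomorphism of `G`-graded algebras -/
def IsGradedIso {B : Type*} [NonUnitalNonAssocSemiring B] [Module K B]
    (𝒜 : G → Submodule K A) (ℬ : G → Submodule K B) : Prop :=
  ∃ ψ : A ≃ₗ[K] B, (∀ x y : A, ψ (x * y) = ψ x * ψ y) ∧
    ∀ g : G, (𝒜 g).map (ψ : A →ₗ[K] B) = ℬ g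

/-!
The variables of a polynomial can be specialized to a homogeneous basis `a` of the algebra. By
graded simplicity there are polynomials which alternate in these variables and do not vanish;
substituting `x_i x_j` for `x_k` in such a polynomial multiplies its value at `a` by the
structure constant of `a` at `(i, j, k)`. Hence every polynomial in structure constants is
realized as a ratio of values of two nonassociative polynomials, and the graded identities
determine the Zariski closure of the set of structure constants of homogeneous bases.

Two algebras with the same identities thus give maps from varieties of bases to the space of
structure constants whose images have the same closure. The tensor product of the coordinate
rings over the polynomial ring is then nonzero, and by the Nullstellensatz the images have a
common point: homogeneous bases with the same structure constants, i.e. an isomorphism.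
-/
section CommutativeAlgebra

open TensorProduct

theorem nontrivial_tensorProduct_of_comap_eq {R X Y : Type*} [CommRing R] [CommRing X] [CommRing Y]
    [Algebra R X] [Algebra R Y] (q : Ideal X) (r : Ideal Y) [q.IsPrime] [r.IsPrime]
    (h : q.comap (algebraMap R X) = r.comap (algebraMap R Y)) : Nontrivial (X ⊗[R] Y) := by
  let p := q.comap (algebraMap R X)
  let : Algebra (R ⧸ p) (X ⧸ q) := (Ideal.quotientMap q _ le_rfl).toAlgebra
  let : Algebra (R ⧸ p) (Y ⧸ r) := (Ideal.quotientMap r _ h.le).toAlgebra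
  have : IsScalarTower R (R ⧸ p) (X ⧸ q) := IsScalarTower.of_algebraMap_eq' rfl
  have : IsScalarTower R (R ⧸ p) (Y ⧸ r) := IsScalarTower.of_algebraMap_eq' rfl
  have : Nontrivial ((X ⧸ q) ⊗[R ⧸ p] (Y ⧸ r)) :=
    Algebra.TensorProduct.nontrivial_of_algebraMap_injective_of_isDomain _ _ _
      (Ideal.quotientMap_injective' le_rfl) (Ideal.quotientMap_injective' h.ge)
  exact ((Algebra.TensorProduct.mapOfCompatibleSMul (R ⧸ p) R R (X ⧸ q) (Y ⧸ r)).comp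
    (Algebra.TensorProduct.map (Ideal.Quotient.mkₐ R q) (Ideal.Quotient.mkₐ R r))).domain_nontrivial

theorem nontrivial_tensorProduct_of_ker_algebraMap_eq {R X Y : Type*} [CommRing R] [CommRing X]
    [CommRing Y] [Algebra R X] [Algebra R Y] [Nontrivial X]
    (h : RingHom.ker (algebraMap R X) = RingHom.ker (algebraMap R Y)) :
    Nontrivial (X ⊗[R] Y) := by
  obtain ⟨p, hpX⟩ := Ideal.nonempty_minimalPrimes (RingHom.ker_ne_top (algebraMap R X))
  have hpY : p ∈ (RingHom.ker (algebraMap R Y)).minimalPrimes := h ▸ hpX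
  obtain ⟨q, _, -, hq⟩ := Ideal.exists_comap_eq_of_mem_minimalPrimes (I := ⊥) _ p hpX
  obtain ⟨r, _, -, hr⟩ := Ideal.exists_comap_eq_of_mem_minimalPrimes (I := ⊥) _ p hpY
  exact nontrivial_tensorProduct_of_comap_eq q r (hq.trans hr.symm)

variable {F : Type*} [Field F] [IsAlgClosed F]

theorem nonempty_algHom_of_finiteType (R : Type*) [CommRing R] [Algebra F R] [Nontrivial R]
    [Algebra.FiniteType F R] : Nonempty (R →ₐ[F] F) := by
  obtain ⟨m, hm⟩ := Ideal.exists_maximal R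
  let : Field (R ⧸ m) := Ideal.Quotient.field m
  have : Module.Finite F (R ⧸ m) := finite_of_finite_type_of_isJacobsonRing F (R ⧸ m)
  exact ⟨(IsAlgClosed.lift : (R ⧸ m) →ₐ[F] F).comp (Ideal.Quotient.mkₐ F m)⟩

theorem exists_algHom_comp_eq_of_ker_eq {P X Y : Type*} [CommRing P] [CommRing X] [CommRing Y]
    [Algebra F P] [Algebra F X] [Algebra F Y] [Algebra.FiniteType F X] [Algebra.FiniteType F Y]
    [Nontrivial X] (f : P →ₐ[F] X) (g : P →ₐ[F] Y) (h : RingHom.ker f = RingHom.ker g) :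
    ∃ (φ : X →ₐ[F] F) (ψ : Y →ₐ[F] F), φ.comp f = ψ.comp g := by
  let : Algebra P X := f.toRingHom.toAlgebra
  let : Algebra P Y := g.toRingHom.toAlgebra
  have : IsScalarTower F P X := IsScalarTower.of_algHom f
  have : IsScalarTower F P Y := IsScalarTower.of_algHom g
  have : Nontrivial (X ⊗[P] Y) := nontrivial_tensorProduct_of_ker_algebraMap_eq h
  have : Algebra.FiniteType F (X ⊗[F] Y) := .trans (S := X) inferInstance inferInstance
  have : Algebra.FiniteType F (X ⊗[P] Y) :=
    .of_surjective (Algebra.TensorProduct.mapOfCompatibleSMul P F F X Y)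
      (TensorProduct.mapOfCompatibleSMul_surjective P F F X Y)
  obtain ⟨θ⟩ := nonempty_algHom_of_finiteType (F := F) (X ⊗[P] Y)
  refine ⟨θ.comp Algebra.TensorProduct.includeLeft,
    θ.comp ((Algebra.TensorProduct.includeRight : Y →ₐ[P] X ⊗[P] Y).restrictScalars F),
    AlgHom.ext fun p => ?_⟩
  have hp : (algebraMap P X p) ⊗ₜ[P] (1 : Y) = 1 ⊗ₜ[P] algebraMap P Y p := by
    simp only [Algebra.algebraMap_eq_smul_one, smul_tmul]
  exact congrArg θ hp

end CommutativeAlgebra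

section InternalDirectSum

variable {γ R M ι : Type*} [DecidableEq γ] [Semiring R] [AddCommMonoid M] [Module R M]
  {𝒰 : γ → Submodule R M}

/-- The projection of an internal direct sum onto its component of index `g`, as an endomorphism
of the ambient module. -/
def componentProj (h : DirectSum.IsInternal 𝒰) (g : γ) : M →ₗ[R] M :=
  (𝒰 g).subtype ∘ₗ DirectSum.component R γ (fun g => 𝒰 g) g ∘ₗ
    (LinearEquiv.ofBijective (DirectSum.coeLinearMap 𝒰) h).symm

theorem componentProj_of_mem (h : DirectSum.IsInternal 𝒰) {g : γ} {x : M} (hx : x ∈ 𝒰 g) :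
    componentProj h g x = x :=
  congrArg Subtype.val (h.ofBijective_coeLinearMap_of_mem hx)

theorem componentProj_of_mem_of_ne (h : DirectSum.IsInternal 𝒰) {g g' : γ} (hne : g ≠ g') {x : M}
    (hx : x ∈ 𝒰 g) : componentProj h g' x = 0 :=
  congrArg Subtype.val (h.ofBijective_coeLinearMap_of_mem_ne hne hx)

theorem mem_iff_repr_eq_zero (h : DirectSum.IsInternal 𝒰) {deg : ι → γ} {b : Module.Basis ι R M}
    (hb : ∀ i, b i ∈ 𝒰 (deg i)) {g : γ} {x : M} :
    x ∈ 𝒰 g ↔ ∀ i, deg i ≠ g → b.repr x i = 0 := by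
  constructor
  · intro hx i hi
    have hcoord : b.coord i ∘ₗ componentProj h g = 0 := b.ext fun j => by
      by_cases hj : deg j = g
      · have hji : j ≠ i := fun hji => hi (hji ▸ hj)
        rw [LinearMap.comp_apply, componentProj_of_mem h (hj ▸ hb j), b.coord_apply, b.repr_self,
          Finsupp.single_eq_of_ne hji.symm, LinearMap.zero_apply]
      · rw [LinearMap.comp_apply, componentProj_of_mem_of_ne h hj (hb j), map_zero,
          LinearMap.zero_apply]
    calc b.repr x i = b.coord i (componentProj h g x) := by
          rw [componentProj_of_mem h hx, b.coord_apply]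
      _ = 0 := LinearMap.congr_fun hcoord x
  · intro hx
    rw [← b.linearCombination_repr x, Finsupp.linearCombination_apply]
    refine sum_mem fun i hi => ?_
    have hdeg : deg i = g := by_contra fun hne => Finsupp.mem_support_iff.mp hi (hx i hne)
    exact Submodule.smul_mem _ _ (hdeg ▸ hb i)

theorem exists_homogeneous_basis {F V : Type*} [Field F] [AddCommGroup V] [Module F V]
    [FiniteDimensional F V] {𝒱 : γ → Submodule F V} (h : DirectSum.IsInternal 𝒱) :
    ∃ (n : ℕ) (deg : Fin n → γ) (b : Module.Basis (Fin n) F V), ∀ i, b i ∈ 𝒱 (deg i) := by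
  let b := h.collectedBasis fun g => Module.finBasis F (𝒱 g)
  have := FiniteDimensional.fintypeBasisIndex b
  let e := Fintype.equivFin (Σ g, Fin (Module.finrank F (𝒱 g)))
  refine ⟨_, fun i => (e.symm i).1, b.reindex e, fun i => ?_⟩
  rw [Module.Basis.reindex_apply]
  exact h.collectedBasis_mem _ _

end InternalDirectSum

section GradedSimple

variable {F U : Type*} [Field F] [NonUnitalNonAssocRing U] [Module F U] {𝒰 : G → Submodule F U}

theorem isMulIdeal_iSup {ι : Type*} (hgr : IsAlgGrading F 𝒰) {N : ι → Submodule F U}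
    (hN : ∀ g, ∀ a ∈ 𝒰 g, ∀ i, ∀ x ∈ N i, a * x ∈ ⨆ i, N i ∧ x * a ∈ ⨆ i, N i) :
    IsMulIdeal F (⨆ i, N i) := by
  intro a x hx
  have ha : a ∈ ⨆ g, 𝒰 g := hgr.1.submodule_iSup_eq_top ▸ Submodule.mem_top
  induction hx using Submodule.iSup_induction' with
  | zero => simp
  | add x y _ _ hx hy =>
    rw [mul_add, add_mul]
    exact ⟨add_mem hx.1 hy.1, add_mem hx.2 hy.2⟩
  | mem i x hx =>
    induction ha using Submodule.iSup_induction' with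
    | zero => simp
    | add a b _ _ ha hb =>
      rw [mul_add, add_mul]
      exact ⟨add_mem ha.1 hb.1, add_mem ha.2 hb.2⟩
    | mem g a ha => exact hN g a ha i x hx

theorem isMulIdeal_iSup_inf (hgr : IsAlgGrading F 𝒰) {I : Submodule F U} (hI : IsMulIdeal F I) :
    IsMulIdeal F (⨆ g, I ⊓ 𝒰 g) :=
  isMulIdeal_iSup hgr fun g a ha h x hx =>
    ⟨Submodule.mem_iSup_of_mem (g * h) ⟨(hI a x hx.1).1, hgr.2 g h a ha x hx.2⟩,
      Submodule.mem_iSup_of_mem (h * g) ⟨(hI a x hx.1).2, hgr.2 h g x hx.2 a ha⟩⟩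

theorem isHomogSubmodule_iSup_inf {γ : Type*} (𝒱 : γ → Submodule F U) (I : Submodule F U) :
    IsHomogSubmodule F 𝒱 (⨆ g, I ⊓ 𝒱 g) :=
  le_antisymm (iSup_mono fun g => le_inf (le_iSup (fun g => I ⊓ 𝒱 g) g) inf_le_right)
    (iSup_le fun _ => inf_le_left)

theorem IsGradedSimple.eq_top_of_mem (hs : IsGradedSimple F 𝒰) (hgr : IsAlgGrading F 𝒰)
    {I : Submodule F U} (hI : IsMulIdeal F I) {g : G} {x : U} (hxI : x ∈ I) (hx : x ∈ 𝒰 g)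
    (hx0 : x ≠ 0) : I = ⊤ := by
  have hxJ : x ∈ ⨆ g, I ⊓ 𝒰 g := Submodule.mem_iSup_of_mem g ⟨hxI, hx⟩
  rcases hs.2 _ (isMulIdeal_iSup_inf hgr hI) (isHomogSubmodule_iSup_inf 𝒰 I) with hbot | htop
  · exact absurd (by simpa only [hbot, Submodule.mem_bot] using hxJ) hx0
  · exact top_unique (htop.ge.trans (iSup_le fun _ => inf_le_left))

theorem IsGradedSimple.exists_homogeneous_mul_ne_zero (hs : IsGradedSimple F 𝒰)
    (hgr : IsAlgGrading F 𝒰) : ∃ g h, ∃ x ∈ 𝒰 g, ∃ y ∈ 𝒰 h, x * y ≠ 0 := by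
  by_contra! hzero
  obtain ⟨a, b, hab⟩ := hs.1
  have hspan (x : U) : x ∈ ⨆ g, 𝒰 g := hgr.1.submodule_iSup_eq_top ▸ Submodule.mem_top
  have hhom (g : G) (x : U) (hx : x ∈ 𝒰 g) (y : U) : x * y = 0 :=
    Submodule.iSup_induction 𝒰 (motive := fun y => x * y = 0) (hspan y)
      (fun h y hy => hzero g h x hx y hy) (mul_zero x)
      fun y z hy hz => by rw [mul_add, hy, hz, add_zero]
  exact hab <| Submodule.iSup_induction 𝒰 (motive := fun x => x * b = 0) (hspan a)
    (fun g x hx => hhom g x hx b) (zero_mul b)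
    fun x y hx hy => by rw [add_mul, hx, hy, add_zero]

theorem IsGradedSimple.eq_top_of_forall_mul_mem (hs : IsGradedSimple F 𝒰)
    (hgr : IsAlgGrading F 𝒰) {I : Submodule F U} (hI : IsMulIdeal F I)
    (hmul : ∀ x y, x * y ∈ I) : I = ⊤ := by
  obtain ⟨g, h, x, hx, y, hy, hxy⟩ := hs.exists_homogeneous_mul_ne_zero hgr
  exact hs.eq_top_of_mem hgr hI (hmul x y) (hgr.2 g h x hx y hy) hxy

end GradedSimple

section Burnside

variable {F V : Type*} [Field F] [AddCommGroup V] [Module F V]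

theorem subalgebra_end_eq_top_of_transitive [IsAlgClosed F] [FiniteDimensional F V] [Nontrivial V]
    {S : Subalgebra F (Module.End F V)} (hS : ∀ w ≠ 0, ∀ y, ∃ T ∈ S, T w = y) : S = ⊤ := by
  have : IsSimpleModule S V := isSimpleModule_iff_toSpanSingleton_surjective.mpr
    ⟨inferInstance, fun w hw y =>
      let ⟨T, hT, hTw⟩ := hS w hw y
      ⟨⟨T, hT⟩, hTw⟩⟩
  have hscalar := (IsSimpleModule.algebraMap_end_bijective_of_isAlgClosed (A := S) (V := V) F).2
  have : Module.Finite (Module.End S V) V := Module.Finite.of_restrictScalars_finite F _ _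
  refine eq_top_iff.mpr fun φ _ => ?_
  let φ' : Module.End (Module.End S V) V :=
    { toFun := φ
      map_add' := φ.map_add
      map_smul' := fun c v => by
        obtain ⟨c, rfl⟩ := hscalar c
        exact φ.map_smul c v }
  obtain ⟨T, hT⟩ := Module.Finite.toModuleEnd_moduleEnd_surjective (R := S) φ'
  have hφ : φ = T := LinearMap.ext fun v => (LinearMap.congr_fun hT v).symm
  exact hφ ▸ T.2

/-- The algebra of all endomorphisms of a subspace `X` that are restrictions of operators
in `M`. -/
def restrictedSubalgebra (M : Subalgebra F (Module.End F V)) (X : Submodule F V) :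
    Subalgebra F (Module.End F X) where
  carrier := {φ | ∃ T ∈ M, ∀ v : X, T v = φ v}
  mul_mem' := by
    rintro φ ψ ⟨T, hT, hTφ⟩ ⟨T', hT', hTψ⟩
    exact ⟨T * T', mul_mem hT hT', fun v => by
      rw [Module.End.mul_apply, hTψ, hTφ, Module.End.mul_apply]⟩
  add_mem' := by
    rintro φ ψ ⟨T, hT, hTφ⟩ ⟨T', hT', hTψ⟩
    exact ⟨T + T', add_mem hT hT', fun v => by
      rw [LinearMap.add_apply, hTψ, hTφ, LinearMap.add_apply, Submodule.coe_add]⟩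
  algebraMap_mem' c := ⟨algebraMap F _ c, M.algebraMap_mem c, fun _ => rfl⟩

theorem restrictedSubalgebra_eq_top [IsAlgClosed F] [FiniteDimensional F V]
    {M : Subalgebra F (Module.End F V)} {X : Submodule F V} [Nontrivial X]
    (hM : ∀ w ∈ X, w ≠ 0 → ∀ y ∈ X, ∃ T ∈ M, (∀ v ∈ X, T v ∈ X) ∧ T w = y) :
    restrictedSubalgebra M X = ⊤ :=
  subalgebra_end_eq_top_of_transitive fun w hw y =>
    let ⟨T, hT, hTX, hTw⟩ := hM w w.2 (Submodule.coe_eq_zero.not.mpr hw) y y.2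
    ⟨T.restrict hTX, ⟨T, hT, fun _ => rfl⟩, Subtype.ext hTw⟩

end Burnside

section MultiplicationAlgebra

variable {F U : Type*} [Field F] [NonUnitalNonAssocRing U] [Module F U]
  [SMulCommClass F U U] [IsScalarTower F U U]

variable (F U) in
/-- The unital multiplication algebra of `U`: unlike `MultAlg` it contains the identity, so that
every element lies in its own orbit. -/
def unitalMultAlg : Subalgebra F (Module.End F U) :=
  Algebra.adjoin F
    (Set.range (LinearMap.mulLeft F (A := U)) ∪ Set.range (LinearMap.mulRight F (A := U)))

theorem mulLeft_mem_unitalMultAlg (a : U) : LinearMap.mulLeft F a ∈ unitalMultAlg F U :=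
  Algebra.subset_adjoin (.inl ⟨a, rfl⟩)

theorem mulRight_mem_unitalMultAlg (a : U) : LinearMap.mulRight F a ∈ unitalMultAlg F U :=
  Algebra.subset_adjoin (.inr ⟨a, rfl⟩)

variable {𝒰 : G → Submodule F U}

/-- The orbit of `w` under the operators of the multiplication algebra that map `𝒰 g` to `𝒰 k`. -/
def homogeneousOrbit (𝒰 : G → Submodule F U) (g : G) (w : U) (k : G) : Submodule F U :=
  ((unitalMultAlg F U).toSubmodule ⊓ Submodule.compatibleMaps (𝒰 g) (𝒰 k)).map
    (LinearMap.applyₗ w)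

theorem isMulIdeal_iSup_homogeneousOrbit (hgr : IsAlgGrading F 𝒰) (g : G) (w : U) :
    IsMulIdeal F (⨆ k, homogeneousOrbit 𝒰 g w k) := by
  refine isMulIdeal_iSup hgr fun h a ha k x => ?_
  rintro ⟨T, ⟨hT, hTg⟩, rfl⟩
  exact ⟨Submodule.mem_iSup_of_mem (h * k) ⟨LinearMap.mulLeft F a * T,
      ⟨(unitalMultAlg F U).mul_mem (mulLeft_mem_unitalMultAlg a) hT,
        fun v hv => hgr.2 h k a ha _ (hTg hv)⟩, rfl⟩,
    Submodule.mem_iSup_of_mem (k * h) ⟨LinearMap.mulRight F a * T,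
      ⟨(unitalMultAlg F U).mul_mem (mulRight_mem_unitalMultAlg a) hT,
        fun v hv => hgr.2 k h _ (hTg hv) a ha⟩, rfl⟩⟩

theorem IsGradedSimple.homogeneousOrbit_eq (hs : IsGradedSimple F 𝒰) (hgr : IsAlgGrading F 𝒰)
    {g : G} {w : U} (hw : w ∈ 𝒰 g) (hw0 : w ≠ 0) : homogeneousOrbit 𝒰 g w = 𝒰 := by
  have hmem : w ∈ ⨆ k, homogeneousOrbit 𝒰 g w k :=
    Submodule.mem_iSup_of_mem g ⟨1, ⟨one_mem (unitalMultAlg F U), fun _ hv => hv⟩, rfl⟩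
  have hle : homogeneousOrbit 𝒰 g w ≤ 𝒰 := by
    rintro k x ⟨T, ⟨-, hT⟩, rfl⟩
    exact hT hw
  exact (hgr.1.submodule_iSupIndep.le_iff_eq_of_iSup_eq_top
    (hs.eq_top_of_mem hgr (isMulIdeal_iSup_homogeneousOrbit hgr g w) hmem hw hw0)).mp hle

theorem IsGradedSimple.restrictedSubalgebra_unitalMultAlg_eq_top [IsAlgClosed F]
    [FiniteDimensional F U] (hs : IsGradedSimple F 𝒰) (hgr : IsAlgGrading F 𝒰) (g : G)
    [Nontrivial (𝒰 g)] : restrictedSubalgebra (unitalMultAlg F U) (𝒰 g) = ⊤ :=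
  restrictedSubalgebra_eq_top fun w hw hw0 y hy => by
    rw [← hs.homogeneousOrbit_eq hgr hw hw0] at hy
    obtain ⟨T, ⟨hT, hTg⟩, hTw⟩ := hy
    exact ⟨T, hT, fun _ hv => hTg hv, hTw⟩

theorem IsGradedSimple.exists_mem_unitalMultAlg_apply_basis [IsAlgClosed F] [FiniteDimensional F U]
    (hs : IsGradedSimple F 𝒰) (hgr : IsAlgGrading F 𝒰) {ι : Type*} [DecidableEq ι] {deg : ι → G}
    {b : Module.Basis ι F U} (hb : ∀ i, b i ∈ 𝒰 (deg i)) (i : ι) :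
    ∃ T ∈ unitalMultAlg F U, ∀ j, deg j = deg i → T (b j) = if j = i then b i else 0 := by
  have : Nontrivial (𝒰 (deg i)) :=
    ⟨⟨b i, hb i⟩, 0, fun h => b.ne_zero i (congrArg Subtype.val h)⟩
  let φ : Module.End F (𝒰 (deg i)) :=
    ((b.coord i).smulRight ⟨b i, hb i⟩).comp (𝒰 (deg i)).subtype
  have hφ : φ ∈ restrictedSubalgebra (unitalMultAlg F U) (𝒰 (deg i)) :=
    hs.restrictedSubalgebra_unitalMultAlg_eq_top hgr (deg i) ▸ Algebra.mem_top
  obtain ⟨T, hT, hTφ⟩ := hφ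
  refine ⟨T, hT, fun j hj => (hTφ ⟨b j, hj ▸ hb j⟩).trans ?_⟩
  by_cases hji : j = i
  · subst hji
    simp [φ]
  · simp [φ, hji]

end MultiplicationAlgebra

section TwoSortedPolynomials

/-- Nonassociative polynomials in two families of variables: the variables indexed by `ι` are
those in which a polynomial may be multilinear or alternating, the ones indexed by `κ` are
parameters. -/
abbrev BiPoly (F ι κ : Type*) [Field F] : Type _ :=
  FreeNonUnitalNonAssocAlgebra F (ι ⊕ κ)

variable {F ι κ U W V : Type*} [Field F] [AddCommMonoid V] [Module F V]
  [NonUnitalNonAssocRing U] [Module F U] [SMulCommClass F U U] [IsScalarTower F U U]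
  [NonUnitalNonAssocRing W] [Module F W] [SMulCommClass F W W] [IsScalarTower F W W]

theorem map_lift_eq_lift_comp {α : Type*} (φ : U →ₙₐ[F] W) (v : α → U)
    (f : FreeNonUnitalNonAssocAlgebra F α) :
    φ (FreeNonUnitalNonAssocAlgebra.lift F v f) =
      FreeNonUnitalNonAssocAlgebra.lift F (φ ∘ v) f := by
  have h : φ.comp (FreeNonUnitalNonAssocAlgebra.lift F v) =
      FreeNonUnitalNonAssocAlgebra.lift F (φ ∘ v) :=
    FreeNonUnitalNonAssocAlgebra.hom_ext F fun i => by
      rw [NonUnitalAlgHom.comp_apply, FreeNonUnitalNonAssocAlgebra.lift_of_apply,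
        FreeNonUnitalNonAssocAlgebra.lift_of_apply, Function.comp_apply]
  exact DFunLike.congr_fun h f

namespace BiPoly

/-- The variable `x_i` of the first family. -/
def X (i : ι) : BiPoly F ι κ := FreeNonUnitalNonAssocAlgebra.of F (Sum.inl i)

/-- The variable `z_k` of the second family. -/
def Z (k : κ) : BiPoly F ι κ := FreeNonUnitalNonAssocAlgebra.of F (Sum.inr k)

/-- Evaluation of a polynomial at `x_i = x i` and `z_k = z k`. -/
def eval (x : ι → U) (z : κ → U) : BiPoly F ι κ →ₙₐ[F] U :=
  FreeNonUnitalNonAssocAlgebra.lift F (Sum.elim x z)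

@[simp]
theorem eval_X (x : ι → U) (z : κ → U) (i : ι) : eval x z (X i : BiPoly F ι κ) = x i :=
  FreeNonUnitalNonAssocAlgebra.lift_of_apply F _ _

@[simp]
theorem eval_Z (x : ι → U) (z : κ → U) (k : κ) : eval x z (Z k : BiPoly F ι κ) = z k :=
  FreeNonUnitalNonAssocAlgebra.lift_of_apply F _ _

/-- Substitution of polynomials for the variables of the first family. -/
def subst (y : ι → BiPoly F ι κ) : BiPoly F ι κ →ₙₐ[F] BiPoly F ι κ :=
  eval y Z

theorem eval_subst (x : ι → U) (z : κ → U) (y : ι → BiPoly F ι κ) (f : BiPoly F ι κ) :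
    eval x z (subst y f) = eval (fun i => eval x z (y i)) z f := by
  have hz : eval x z ∘ Sum.elim y Z = Sum.elim (fun i => eval x z (y i)) z := by
    rw [Sum.comp_elim]
    exact congrArg _ (funext fun k => eval_Z x z k)
  exact (map_lift_eq_lift_comp (eval x z) (Sum.elim y Z) f).trans
    (congrArg (fun v => FreeNonUnitalNonAssocAlgebra.lift F v f) hz)

/-- The linear polynomial in the parameters that takes the value `a` when the parameters are
specialized to the basis `b`. -/
def const [Fintype κ] (b : Module.Basis κ F V) (a : V) : BiPoly F ι κ := ∑ k, b.repr a k • Z k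

@[simp]
theorem eval_const [Fintype κ] (b : Module.Basis κ F U) (x : ι → U) (a : U) :
    eval x b (const b a : BiPoly F ι κ) = a := by
  simp only [const, map_sum, map_smul, eval_Z, b.sum_repr]

section Multilinear

variable [DecidableEq ι]

/-- The polynomials all of whose monomials contain each `x_i` with `i ∈ s` exactly once and no
other `x_i`. -/
inductive IsMultilinear : Finset ι → BiPoly F ι κ → Prop
  | zero (s : Finset ι) : IsMultilinear s 0
  | add {s : Finset ι} {f g : BiPoly F ι κ} :
      IsMultilinear s f → IsMultilinear s g → IsMultilinear s (f + g)
  | smul {s : Finset ι} {f : BiPoly F ι κ} (c : F) : IsMultilinear s f → IsMultilinear s (c • f)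
  | X (i : ι) : IsMultilinear {i} (X i)
  | Z (k : κ) : IsMultilinear ∅ (Z k)
  | mul {s t : Finset ι} {f g : BiPoly F ι κ} : Disjoint s t →
      IsMultilinear s f → IsMultilinear t g → IsMultilinear (s ∪ t) (f * g)

theorem isMultilinear_const [Fintype κ] (b : Module.Basis κ F V) (a : V) :
    IsMultilinear ∅ (const b a : BiPoly F ι κ) :=
  Finset.sum_induction _ (IsMultilinear ∅) (fun _ _ => .add) (.zero ∅) fun k _ => .smul _ (.Z k)

theorem IsMultilinear.const_mul [Fintype κ] {s : Finset ι} {f : BiPoly F ι κ}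
    (hf : IsMultilinear s f) (b : Module.Basis κ F V) (a : V) :
    IsMultilinear s (const b a * f) :=
  Finset.empty_union s ▸ .mul (Finset.disjoint_empty_left s) (isMultilinear_const b a) hf

theorem IsMultilinear.mul_const [Fintype κ] {s : Finset ι} {f : BiPoly F ι κ}
    (hf : IsMultilinear s f) (b : Module.Basis κ F V) (a : V) :
    IsMultilinear s (f * const b a) :=
  Finset.union_empty s ▸ .mul (Finset.disjoint_empty_right s) hf (isMultilinear_const b a)

theorem IsMultilinear.eval_congr {s : Finset ι} {f : BiPoly F ι κ} (hf : IsMultilinear s f)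
    {x y : ι → U} (hxy : ∀ i ∈ s, x i = y i) (z : κ → U) : eval x z f = eval y z f := by
  induction hf with
  | zero s => rw [map_zero, map_zero]
  | add _ _ ihf ihg => rw [map_add, map_add, ihf hxy, ihg hxy]
  | smul c _ ihf => rw [map_smul, map_smul, ihf hxy]
  | X i => rw [eval_X, eval_X, hxy i (Finset.mem_singleton_self i)]
  | Z k => rw [eval_Z, eval_Z]
  | mul _ _ _ ihf ihg =>
    rw [map_mul, map_mul, ihf fun i hi => hxy i (Finset.mem_union_left _ hi),
      ihg fun i hi => hxy i (Finset.mem_union_right _ hi)]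

theorem IsMultilinear.eval_update_of_notMem {s : Finset ι} {f : BiPoly F ι κ}
    (hf : IsMultilinear s f) {k : ι} (hk : k ∉ s) (x : ι → U) (y : U) (z : κ → U) :
    eval (Function.update x k y) z f = eval x z f :=
  hf.eval_congr (fun _ hi => Function.update_of_ne (ne_of_mem_of_not_mem hi hk) _ _) z

theorem IsMultilinear.isLinearMap_eval_update {s : Finset ι} {f : BiPoly F ι κ}
    (hf : IsMultilinear s f) {k : ι} (hk : k ∈ s) (x : ι → U) (z : κ → U) :
    IsLinearMap F fun y => eval (Function.update x k y) z f := by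
  induction hf with
  | zero s =>
    simp only [map_zero]
    exact (0 : U →ₗ[F] U).isLinear
  | add _ _ ihf ihg =>
    simp only [map_add]
    exact ((ihf hk).mk' _ + (ihg hk).mk' _).isLinear
  | smul c _ ihf =>
    simp only [map_smul]
    exact (c • (ihf hk).mk' _).isLinear
  | X i =>
    obtain rfl := Finset.mem_singleton.mp hk
    simp only [eval_X, Function.update_self]
    exact (LinearMap.id : U →ₗ[F] U).isLinear
  | Z k => exact absurd hk (Finset.notMem_empty _)
  | @mul s t f g hst hf hg ihf ihg =>
    simp only [map_mul]
    rcases Finset.mem_union.mp hk with hks | hkt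
    · simp only [hg.eval_update_of_notMem (Finset.disjoint_left.mp hst hks)]
      exact (LinearMap.mulRight F (eval x z g) ∘ₗ (ihf hks).mk' _).isLinear
    · simp only [hf.eval_update_of_notMem (Finset.disjoint_right.mp hst hkt)]
      exact (LinearMap.mulLeft F (eval x z f) ∘ₗ (ihg hkt).mk' _).isLinear

/-- A polynomial multilinear in all `x_i`, as a multilinear map of its first arguments. -/
def IsMultilinear.toMultilinearMap [Fintype ι] {f : BiPoly F ι κ}
    (hf : IsMultilinear Finset.univ f) (z : κ → U) : MultilinearMap F (fun _ : ι => U) U :=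
  MultilinearMap.mk' (fun x => eval x z f)
    (fun x k => (hf.isLinearMap_eval_update (Finset.mem_univ k) x z).map_add)
    (fun x k => (hf.isLinearMap_eval_update (Finset.mem_univ k) x z).map_smul)

@[simp]
theorem IsMultilinear.toMultilinearMap_apply [Fintype ι] {f : BiPoly F ι κ}
    (hf : IsMultilinear Finset.univ f) (z : κ → U) (x : ι → U) :
    hf.toMultilinearMap z x = eval x z f :=
  rfl

theorem exists_isMultilinear_eval_eq_apply [Finite κ] (b : Module.Basis κ F U) {s : Finset ι}
    {T : Module.End F U} (hT : T ∈ unitalMultAlg F U) {f : BiPoly F ι κ}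
    (hf : IsMultilinear s f) :
    ∃ g : BiPoly F ι κ, IsMultilinear s g ∧ ∀ x, eval x b g = T (eval x b f) := by
  have := Fintype.ofFinite κ
  induction hT using Algebra.adjoin_induction generalizing f with
  | mem T hT =>
    rcases hT with ⟨a, rfl⟩ | ⟨a, rfl⟩
    · exact ⟨const b a * f, hf.const_mul b a, fun x => by
        rw [map_mul, eval_const, LinearMap.mulLeft_apply]⟩
    · exact ⟨f * const b a, hf.mul_const b a, fun x => by
        rw [map_mul, eval_const, LinearMap.mulRight_apply]⟩
  | algebraMap c => exact ⟨c • f, hf.smul c, fun x => map_smul _ c f⟩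
  | add T T' _ _ ih ih' =>
    obtain ⟨g, hg, hgT⟩ := ih hf
    obtain ⟨g', hg', hgT'⟩ := ih' hf
    exact ⟨g + g', hg.add hg', fun x => by rw [map_add, hgT, hgT', LinearMap.add_apply]⟩
  | mul T T' _ _ ih ih' =>
    obtain ⟨g', hg', hgT'⟩ := ih' hf
    obtain ⟨g, hg, hgT⟩ := ih hg'
    exact ⟨g, hg, fun x => by rw [hgT, hgT', Module.End.mul_apply]⟩

end Multilinear

end BiPoly

end TwoSortedPolynomials

section Alternation

namespace BiPoly

open Equiv

variable {F ι κ γ U : Type*} [Field F] [Fintype ι] [DecidableEq ι]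
  [NonUnitalNonAssocRing U] [Module F U] [SMulCommClass F U U] [IsScalarTower F U U]

/-- Alternation of `f` over the permutations of the variables `x_i` that preserve degrees. -/
def alternate [DecidableEq γ] (deg : ι → γ) (f : BiPoly F ι κ) : BiPoly F ι κ :=
  ∑ σ : Perm ι with ∀ i, deg (σ i) = deg i, Perm.sign σ • subst (fun i => X (σ i)) f

theorem eval_alternate [DecidableEq γ] (deg : ι → γ) (f : BiPoly F ι κ) (x : ι → U) (z : κ → U) :
    eval x z (alternate deg f) =
      ∑ σ : Perm ι with ∀ i, deg (σ i) = deg i, Perm.sign σ • eval (x ∘ σ) z f := by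
  simp only [alternate, map_sum, Units.smul_def, map_zsmul, eval_subst, eval_X]
  rfl

/-- The alternating map is defined on all of `U`: composing the `i`-th argument with the projection
to degree `deg i` kills the permutations that do not preserve degrees. -/
theorem IsMultilinear.exists_alternatingMap [DecidableEq γ] {f : BiPoly F ι κ}
    (hf : IsMultilinear Finset.univ f) {𝒰 : γ → Submodule F U} (h : DirectSum.IsInternal 𝒰)
    (deg : ι → γ) (z : κ → U) :
    ∃ T : U [⋀^ι]→ₗ[F] U,
      ∀ x : ι → U, (∀ i, x i ∈ 𝒰 (deg i)) → eval x z (alternate deg f) = T x := by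
  refine ⟨MultilinearMap.alternatization
    ((hf.toMultilinearMap z).compLinearMap fun i => componentProj h (deg i)), fun x hx => ?_⟩
  rw [eval_alternate, MultilinearMap.alternatization_apply, Finset.sum_filter]
  refine Finset.sum_congr rfl fun σ _ => ?_
  rw [MultilinearMap.domDomCongr_apply, MultilinearMap.compLinearMap_apply]
  split_ifs with hσ
  · have hproj (i : ι) : componentProj h (deg i) (x (σ i)) = x (σ i) :=
      componentProj_of_mem h (hσ i ▸ hx (σ i))
    simp only [hproj, IsMultilinear.toMultilinearMap_apply, Function.comp_def]
  · obtain ⟨i, hi⟩ := not_forall.mp hσ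
    rw [MultilinearMap.map_coord_zero _ i (componentProj_of_mem_of_ne h hi (hx (σ i))), smul_zero]

theorem IsMultilinear.eval_alternate_eq_zero [DecidableEq γ] {f : BiPoly F ι κ}
    (hf : IsMultilinear Finset.univ f) {𝒰 : γ → Submodule F U} (h : DirectSum.IsInternal 𝒰)
    {deg : ι → γ} {x : ι → U} (hx : ∀ i, x i ∈ 𝒰 (deg i)) (hdep : ¬LinearIndependent F x)
    (z : κ → U) : eval x z (alternate deg f) = 0 := by
  obtain ⟨T, hT⟩ := hf.exists_alternatingMap h deg z
  rw [hT x hx, T.map_linearDependent x hdep]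

/-- The elements `w` that are values at the basis `b` of a polynomial multilinear in `s` which
vanishes after every degree-preserving permutation of `b` that moves an element of `s`. -/
def separatedValues (deg : ι → γ) (b : Module.Basis ι F U) (s : Finset ι) : Submodule F U where
  carrier := {w | ∃ f : BiPoly F ι ι, IsMultilinear s f ∧ ∀ σ : Perm ι, (∀ i, deg (σ i) = deg i) →
    eval (b ∘ σ) b f = if ∀ i ∈ s, σ i = i then w else 0}
  add_mem' := by
    rintro w w' ⟨f, hf, hfw⟩ ⟨f', hf', hfw'⟩
    refine ⟨f + f', hf.add hf', fun σ hσ => ?_⟩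
    rw [map_add, hfw σ hσ, hfw' σ hσ, ite_add_ite, add_zero]
  zero_mem' := ⟨0, .zero s, fun σ _ => by rw [map_zero, ite_self]⟩
  smul_mem' := by
    rintro c w ⟨f, hf, hfw⟩
    refine ⟨c • f, hf.smul c, fun σ hσ => ?_⟩
    rw [map_smul, hfw σ hσ, smul_ite, smul_zero]

variable {deg : ι → γ} {b : Module.Basis ι F U}

theorem mem_separatedValues_empty (w : U) : w ∈ separatedValues deg b ∅ :=
  ⟨const b w, isMultilinear_const b w, fun σ _ => by simp⟩

theorem mul_mem_separatedValues_union {s t : Finset ι} (hst : Disjoint s t) {v w : U}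
    (hv : v ∈ separatedValues deg b s) (hw : w ∈ separatedValues deg b t) :
    v * w ∈ separatedValues deg b (s ∪ t) := by
  obtain ⟨f, hf, hfv⟩ := hv
  obtain ⟨f', hf', hfw⟩ := hw
  refine ⟨f * f', hf.mul hst hf', fun σ hσ => ?_⟩
  rw [map_mul, hfv σ hσ, hfw σ hσ, ite_zero_mul_ite_zero]
  simp only [Finset.mem_union, or_imp, forall_and]

theorem isMulIdeal_separatedValues (s : Finset ι) : IsMulIdeal F (separatedValues deg b s) :=
  fun a _ hx => ⟨
    s.empty_union ▸ mul_mem_separatedValues_union s.disjoint_empty_left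
      (mem_separatedValues_empty a) hx,
    s.union_empty ▸ mul_mem_separatedValues_union s.disjoint_empty_right hx
      (mem_separatedValues_empty a)⟩

end BiPoly

open BiPoly

variable {F ι U : Type*} [Field F] [IsAlgClosed F] [Fintype ι] [DecidableEq ι]
  [NonUnitalNonAssocRing U] [Module F U] [SMulCommClass F U U] [IsScalarTower F U U]
  [FiniteDimensional F U] {𝒰 : G → Submodule F U} {deg : ι → G} {b : Module.Basis ι F U}

theorem IsGradedSimple.separatedValues_singleton_eq_top (hs : IsGradedSimple F 𝒰)
    (hgr : IsAlgGrading F 𝒰) (hb : ∀ i, b i ∈ 𝒰 (deg i)) (i : ι) :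
    separatedValues deg b {i} = ⊤ := by
  obtain ⟨T, hT, hTb⟩ := hs.exists_mem_unitalMultAlg_apply_basis hgr hb i
  obtain ⟨f, hf, hfT⟩ := exists_isMultilinear_eval_eq_apply b hT (.X i)
  have hbi : b i ∈ separatedValues deg b {i} := ⟨f, hf, fun σ hσ => by
    rw [hfT, eval_X, Function.comp_apply, hTb _ (hσ i)]
    simp only [Finset.mem_singleton, forall_eq]⟩
  exact hs.eq_top_of_mem hgr (isMulIdeal_separatedValues {i}) hbi (hb i) (b.ne_zero i)

theorem IsGradedSimple.separatedValues_eq_top (hs : IsGradedSimple F 𝒰)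
    (hgr : IsAlgGrading F 𝒰) (hb : ∀ i, b i ∈ 𝒰 (deg i)) (s : Finset ι) :
    separatedValues deg b s = ⊤ := by
  induction s using Finset.induction_on with
  | empty => exact eq_top_iff.mpr fun w _ => mem_separatedValues_empty w
  | insert i s hi ih =>
    rw [Finset.insert_eq]
    refine hs.eq_top_of_forall_mul_mem hgr (isMulIdeal_separatedValues _) fun v w =>
      mul_mem_separatedValues_union (Finset.disjoint_singleton_left.mpr hi) ?_ ?_
    · exact hs.separatedValues_singleton_eq_top hgr hb i ▸ Submodule.mem_top
    · exact ih ▸ Submodule.mem_top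

theorem IsGradedSimple.exists_eval_alternate_eq (hs : IsGradedSimple F 𝒰)
    (hgr : IsAlgGrading F 𝒰) (hb : ∀ i, b i ∈ 𝒰 (deg i)) (w : U) :
    ∃ f : BiPoly F ι ι, IsMultilinear Finset.univ f ∧ eval b b (alternate deg f) = w := by
  have hw : w ∈ separatedValues deg b Finset.univ :=
    hs.separatedValues_eq_top hgr hb Finset.univ ▸ Submodule.mem_top
  obtain ⟨f, hf, hfw⟩ := hw
  refine ⟨f, hf, ?_⟩
  rw [eval_alternate, Finset.sum_eq_single 1]
  · simpa using hfw 1 fun _ => rfl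
  · intro σ hσ hσ1
    have hmoves : ¬∀ i ∈ Finset.univ, σ i = i := fun h =>
      hσ1 (Equiv.ext fun i => h i (Finset.mem_univ i))
    rw [hfw σ (Finset.mem_filter.mp hσ).2, if_neg hmoves, smul_zero]
  · exact fun h => absurd (Finset.mem_filter.mpr ⟨Finset.mem_univ _, fun _ => rfl⟩) h

end Alternation

section StructureConstants

open BiPoly

variable {F ι γ U W : Type*} [Field F]
  [NonUnitalNonAssocRing U] [Module F U] [NonUnitalNonAssocRing W] [Module F W]

/-- The structure constants of an algebra in a basis `a`: the value at `(i, j, k)` is the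
coefficient of `a k` in `a i * a j`. -/
def structConst (a : Module.Basis ι F U) (t : ι × ι × ι) : F :=
  a.repr (a t.1 * a t.2.1) t.2.2

/-- The bases of a graded vector space whose `i`-th element is homogeneous of degree `deg i`. -/
abbrev HomogeneousBasis (𝒰 : γ → Submodule F U) (deg : ι → γ) : Type _ :=
  {a : Module.Basis ι F U // ∀ i, a i ∈ 𝒰 (deg i)}

theorem exists_homogeneousBasis_coe_eq [Fintype ι] [FiniteDimensional F U]
    (hcard : Fintype.card ι = Module.finrank F U) {𝒰 : γ → Submodule F U} {deg : ι → γ}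
    {x : ι → U} (hx : ∀ i, x i ∈ 𝒰 (deg i)) (hli : LinearIndependent F x) :
    ∃ a : HomogeneousBasis 𝒰 deg, ⇑a.1 = x := by
  have hspan := hli.span_eq_top_of_card_eq_finrank' hcard
  exact ⟨⟨.mk hli hspan.ge, fun i => by simpa only [Module.Basis.mk_apply] using hx i⟩,
    Module.Basis.coe_mk hli hspan.ge⟩

theorem HomogeneousBasis.structConst_eq_zero {𝒰 : G → Submodule F U} (hgr : IsAlgGrading F 𝒰)
    {deg : ι → G} (a : HomogeneousBasis 𝒰 deg) {i j k : ι} (hk : deg k ≠ deg i * deg j) :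
    structConst a.1 (i, j, k) = 0 :=
  (mem_iff_repr_eq_zero hgr.1 a.2).mp (hgr.2 _ _ _ (a.2 i) _ (a.2 j)) k hk

theorem alternatingMap_update_basis {V V' : Type*} [AddCommGroup V] [Module F V]
    [AddCommGroup V'] [Module F V'] [Finite ι] [DecidableEq ι] (T : V [⋀^ι]→ₗ[F] V')
    (a : Module.Basis ι F V) (k : ι) (y : V) :
    T (Function.update a k y) = a.repr y k • T a := by
  have := Fintype.ofFinite ι
  nth_rw 1 [← a.sum_repr y]
  rw [T.map_update_sum, Finset.sum_eq_single k]
  · rw [T.map_update_smul, Function.update_eq_self]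
  · intro j _ hj
    rw [T.map_update_smul, T.map_update_self _ hj.symm, smul_zero]
  · exact fun h => absurd (Finset.mem_univ k) h

variable [SMulCommClass F U U] [IsScalarTower F U U] [SMulCommClass F W W] [IsScalarTower F W W]

/-- At every homogeneous basis `a`, the polynomial `f` takes the value of `u` multiplied by
the value of `p` at the structure constants of `a`. -/
def ScalesBy {κ : Type*} (𝒰 : γ → Submodule F U) (deg : ι → γ) (p : MvPolynomial (ι × ι × ι) F)
    (f u : BiPoly F ι κ) : Prop :=
  ∀ (a : HomogeneousBasis 𝒰 deg) (z : κ → U),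
    eval a.1 z f = MvPolynomial.eval (structConst a.1) p • eval a.1 z u

section ScalesBy

variable {κ : Type*} {𝒰 : γ → Submodule F U} {deg : ι → γ} {p q : MvPolynomial (ι × ι × ι) F}
  {f f' u u' : BiPoly F ι κ}

theorem scalesBy_C (c : F) (u : BiPoly F ι κ) : ScalesBy 𝒰 deg (.C c) (c • u) u := fun a z => by
  rw [map_smul, MvPolynomial.eval_C]

theorem scalesBy_zero : ScalesBy 𝒰 deg p (0 : BiPoly F ι κ) 0 := fun a z => by
  rw [map_zero, smul_zero]

theorem ScalesBy.add (h : ScalesBy 𝒰 deg p f u) (h' : ScalesBy 𝒰 deg p f' u') :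
    ScalesBy 𝒰 deg p (f + f') (u + u') := fun a z => by
  rw [map_add, map_add, h a z, h' a z, smul_add]

theorem ScalesBy.smul (c : F) (h : ScalesBy 𝒰 deg p f u) : ScalesBy 𝒰 deg p (c • f) (c • u) :=
  fun a z => by rw [map_smul, map_smul, h a z, smul_comm]

theorem ScalesBy.mul (h : ScalesBy 𝒰 deg p f u) (h' : ScalesBy 𝒰 deg q f' u') :
    ScalesBy 𝒰 deg (p * q) (f * f') (u * u') := fun a z => by
  rw [map_mul, map_mul, map_mul, h a z, h' a z, smul_mul_assoc, mul_smul_comm, mul_smul]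

theorem ScalesBy.add_poly (h : ScalesBy 𝒰 deg p f u) (h' : ScalesBy 𝒰 deg q f' u') :
    ScalesBy 𝒰 deg (p + q) (f * u' + u * f') (u * u') := fun a z => by
  rw [map_add, map_mul, map_mul, map_mul, map_add, h a z, h' a z, smul_mul_assoc, mul_smul_comm,
    add_smul]

variable [DecidableEq ι]

/-- The result of substituting `x_i x_j` for `x_k` in `u`, or `0` if this substitution does not
respect degrees. -/
def substMul [Mul γ] [DecidableEq γ] (deg : ι → γ) (i j k : ι) (u : BiPoly F ι κ) :
    BiPoly F ι κ :=
  if deg k = deg i * deg j then subst (Function.update X k (X i * X j)) u else 0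

theorem eval_subst_update_X (x : ι → U) (z : κ → U) (k : ι) (g u : BiPoly F ι κ) :
    eval x z (subst (Function.update X k g) u) =
      eval (Function.update x k (eval x z g)) z u := by
  rw [eval_subst]
  congr 2
  funext l
  rw [Function.apply_update (fun _ => eval x z)]
  simp only [eval_X]

theorem scalesBy_substMul_alternate [Fintype ι] {𝒰 : G → Submodule F U}
    (hgr : IsAlgGrading F 𝒰) (deg : ι → G) (i j k : ι)
    (hf : IsMultilinear Finset.univ f) :
    ScalesBy 𝒰 deg (.X (i, j, k)) (substMul deg i j k (alternate deg f)) (alternate deg f) := by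
  intro a z
  obtain ⟨T, hT⟩ := hf.exists_alternatingMap hgr.1 deg z
  rw [MvPolynomial.eval_X, substMul]
  split_ifs with hk
  · have hmem (l : ι) : Function.update a.1 k (a.1 i * a.1 j) l ∈ 𝒰 (deg l) := by
      rcases eq_or_ne l k with rfl | hl
      · rw [Function.update_self, hk]
        exact hgr.2 _ _ _ (a.2 i) _ (a.2 j)
      · rw [Function.update_of_ne hl]
        exact a.2 l
    rw [eval_subst_update_X, map_mul, eval_X, eval_X, hT _ hmem, hT _ a.2,
      alternatingMap_update_basis, structConst]
  · rw [a.structConst_eq_zero hgr hk, map_zero, zero_smul]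

end ScalesBy

/-- The values at `b` of the polynomials `u` that admit an `f` scaling by `p` relative to `u`,
simultaneously in `𝒰` and in `𝒲`. -/
def scaledValues (𝒰 : γ → Submodule F U) (𝒲 : γ → Submodule F W) (deg : ι → γ)
    (b : Module.Basis ι F W) (p : MvPolynomial (ι × ι × ι) F) : Submodule F W where
  carrier := {w | ∃ f u : BiPoly F ι ι,
    ScalesBy 𝒰 deg p f u ∧ ScalesBy 𝒲 deg p f u ∧ eval b b u = w}
  add_mem' := by
    rintro _ _ ⟨f, u, hU, hW, rfl⟩ ⟨f', u', hU', hW', rfl⟩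
    exact ⟨f + f', u + u', hU.add hU', hW.add hW', map_add _ _ _⟩
  zero_mem' := ⟨0, 0, scalesBy_zero, scalesBy_zero, map_zero _⟩
  smul_mem' := by
    rintro c _ ⟨f, u, hU, hW, rfl⟩
    exact ⟨c • f, c • u, hU.smul c, hW.smul c, map_smul _ _ _⟩

section ScaledValues

variable {𝒰 : γ → Submodule F U} {𝒲 : γ → Submodule F W} {deg : ι → γ} {b : Module.Basis ι F W}
  {p q : MvPolynomial (ι × ι × ι) F} {v w : W}

theorem mem_scaledValues_C [Finite ι] (c : F) (w : W) : w ∈ scaledValues 𝒰 𝒲 deg b (.C c) :=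
  have := Fintype.ofFinite ι
  ⟨c • const b w, const b w, scalesBy_C c _, scalesBy_C c _, eval_const b _ w⟩

theorem mul_mem_scaledValues_mul (hv : v ∈ scaledValues 𝒰 𝒲 deg b p)
    (hw : w ∈ scaledValues 𝒰 𝒲 deg b q) : v * w ∈ scaledValues 𝒰 𝒲 deg b (p * q) := by
  obtain ⟨f, u, hU, hW, rfl⟩ := hv
  obtain ⟨f', u', hU', hW', rfl⟩ := hw
  exact ⟨f * f', u * u', hU.mul hU', hW.mul hW', map_mul _ _ _⟩

theorem mul_mem_scaledValues_add (hv : v ∈ scaledValues 𝒰 𝒲 deg b p)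
    (hw : w ∈ scaledValues 𝒰 𝒲 deg b q) : v * w ∈ scaledValues 𝒰 𝒲 deg b (p + q) := by
  obtain ⟨f, u, hU, hW, rfl⟩ := hv
  obtain ⟨f', u', hU', hW', rfl⟩ := hw
  exact ⟨f * u' + u * f', u * u', hU.add_poly hU', hW.add_poly hW', map_mul _ _ _⟩

theorem isMulIdeal_scaledValues [Finite ι] : IsMulIdeal F (scaledValues 𝒰 𝒲 deg b p) := by
  intro a x hx
  constructor
  · simpa only [map_one, one_mul] using mul_mem_scaledValues_mul (mem_scaledValues_C 1 a) hx
  · simpa only [map_one, mul_one] using mul_mem_scaledValues_mul hx (mem_scaledValues_C 1 a)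

end ScaledValues

theorem IsGradedSimple.scaledValues_eq_top [IsAlgClosed F] [Finite ι] [FiniteDimensional F W]
    {𝒰 : G → Submodule F U} {𝒲 : G → Submodule F W} (hs : IsGradedSimple F 𝒲)
    (hgrU : IsAlgGrading F 𝒰) (hgrW : IsAlgGrading F 𝒲) {deg : ι → G}
    (b : HomogeneousBasis 𝒲 deg) (p : MvPolynomial (ι × ι × ι) F) :
    scaledValues 𝒰 𝒲 deg b.1 p = ⊤ := by
  classical
  have := Fintype.ofFinite ι
  induction p using MvPolynomial.induction_on with
  | C c => exact eq_top_iff.mpr fun w _ => mem_scaledValues_C c w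
  | add p q hp hq =>
    exact hs.eq_top_of_forall_mul_mem hgrW isMulIdeal_scaledValues fun v w =>
      mul_mem_scaledValues_add (hp ▸ Submodule.mem_top) (hq ▸ Submodule.mem_top)
  | mul_X p t hp =>
    refine hs.eq_top_of_forall_mul_mem hgrW isMulIdeal_scaledValues fun v w =>
      mul_mem_scaledValues_mul (hp ▸ Submodule.mem_top) ?_
    obtain ⟨f, hf, hfw⟩ := hs.exists_eval_alternate_eq hgrW b.2 w
    exact ⟨substMul deg t.1 t.2.1 t.2.2 (alternate deg f), alternate deg f,
      scalesBy_substMul_alternate hgrU deg _ _ _ hf, scalesBy_substMul_alternate hgrW deg _ _ _ hf,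
      hfw⟩

end StructureConstants

section GradedIdentities

open BiPoly

variable {F γ U W : Type*} [Field F]
  [NonUnitalNonAssocRing U] [Module F U] [SMulCommClass F U U] [IsScalarTower F U U]
  [NonUnitalNonAssocRing W] [Module F W] [SMulCommClass F W W] [IsScalarTower F W W]

section Transfer

variable {𝒰 : γ → Submodule F U} {𝒲 : γ → Submodule F W}

theorem lift_eq_zero_of_forall_isGradedPI {α : Type*} [Countable α]
    (h : ∀ f, IsGradedPI F 𝒰 f → IsGradedPI F 𝒲 f) {deg : α → γ}
    {f : FreeNonUnitalNonAssocAlgebra F α}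
    (hf : ∀ v : α → U, (∀ i, v i ∈ 𝒰 (deg i)) → FreeNonUnitalNonAssocAlgebra.lift F v f = 0)
    {v : α → W} (hv : ∀ i, v i ∈ 𝒲 (deg i)) : FreeNonUnitalNonAssocAlgebra.lift F v f = 0 := by
  obtain ⟨e, he⟩ := exists_injective_nat α
  let rename (i : α) : γ × ℕ := (deg i, e i)
  have hinj : rename.Injective := fun i j hij => he (congrArg Prod.snd hij)
  let f' := FreeNonUnitalNonAssocAlgebra.lift F (FreeNonUnitalNonAssocAlgebra.of F ∘ rename) f
  have hf' : IsGradedPI F 𝒰 f' := fun w hw => by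
    rw [map_lift_eq_lift_comp, ← Function.comp_assoc, FreeNonUnitalNonAssocAlgebra.of_comp_lift]
    exact hf _ fun i => hw (rename i)
  have hv' (p : γ × ℕ) : rename.extend v 0 p ∈ 𝒲 p.1 := by
    by_cases hp : ∃ i, rename i = p
    · obtain ⟨i, rfl⟩ := hp
      rw [hinj.extend_apply]
      exact hv i
    · rw [Function.extend_apply' _ _ _ hp]
      exact zero_mem _
  have hzero := h f' hf' _ hv'
  rwa [map_lift_eq_lift_comp, ← Function.comp_assoc, FreeNonUnitalNonAssocAlgebra.of_comp_lift,
    Function.extend_comp hinj] at hzero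

theorem BiPoly.eval_eq_zero_of_forall_isGradedPI {ι κ : Type*} [Countable ι] [Countable κ]
    (h : ∀ f, IsGradedPI F 𝒰 f → IsGradedPI F 𝒲 f) {deg : ι → γ} {deg' : κ → γ}
    {f : BiPoly F ι κ}
    (hf : ∀ (x : ι → U) (z : κ → U), (∀ i, x i ∈ 𝒰 (deg i)) → (∀ k, z k ∈ 𝒰 (deg' k)) →
      eval x z f = 0)
    {x : ι → W} {z : κ → W} (hx : ∀ i, x i ∈ 𝒲 (deg i)) (hz : ∀ k, z k ∈ 𝒲 (deg' k)) :
    eval x z f = 0 := by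
  refine lift_eq_zero_of_forall_isGradedPI h (deg := Sum.elim deg deg') (fun v hv => ?_)
    (Sum.forall.mpr ⟨hx, hz⟩)
  rw [← Sum.elim_comp_inl_inr v]
  exact hf _ _ (fun i => hv (.inl i)) fun k => hv (.inr k)

end Transfer

variable {ι : Type*} [IsAlgClosed F] [FiniteDimensional F W]
  {𝒰 : G → Submodule F U} {𝒲 : G → Submodule F W} {deg : ι → G}

theorem IsGradedSimple.exists_linearIndependent_of_forall_isGradedPI [Finite ι]
    (hs : IsGradedSimple F 𝒲) (hgrU : IsAlgGrading F 𝒰) (hgrW : IsAlgGrading F 𝒲)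
    (h : ∀ f, IsGradedPI F 𝒰 f → IsGradedPI F 𝒲 f) (b : HomogeneousBasis 𝒲 deg) :
    ∃ x : ι → U, (∀ i, x i ∈ 𝒰 (deg i)) ∧ LinearIndependent F x := by
  classical
  have := Fintype.ofFinite ι
  obtain ⟨v, w, hvw⟩ := hs.1
  obtain ⟨f, hf, hfvw⟩ := hs.exists_eval_alternate_eq hgrW b.2 (v * w)
  by_contra! hdep
  refine hvw (hfvw.symm.trans ?_)
  exact eval_eq_zero_of_forall_isGradedPI h (deg' := deg)
    (fun x z hx _ => hf.eval_alternate_eq_zero hgrU.1 hx (hdep x hx) z) b.2 b.2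

theorem IsGradedSimple.eval_structConst_eq_zero [Fintype ι] [FiniteDimensional F U]
    (hs : IsGradedSimple F 𝒲) (hgrU : IsAlgGrading F 𝒰) (hgrW : IsAlgGrading F 𝒲)
    (h : ∀ f, IsGradedPI F 𝒰 f → IsGradedPI F 𝒲 f) (hcard : Fintype.card ι = Module.finrank F U)
    {p : MvPolynomial (ι × ι × ι) F}
    (hp : ∀ a : HomogeneousBasis 𝒰 deg, MvPolynomial.eval (structConst a.1) p = 0)
    (b : HomogeneousBasis 𝒲 deg) : MvPolynomial.eval (structConst b.1) p = 0 := by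
  classical
  obtain ⟨v, w, hvw⟩ := hs.1
  have hv : v ∈ scaledValues 𝒰 𝒲 deg b.1 p :=
    hs.scaledValues_eq_top hgrU hgrW b p ▸ Submodule.mem_top
  obtain ⟨f, u, hfU, hfW, rfl⟩ := hv
  obtain ⟨f', hf', rfl⟩ := hs.exists_eval_alternate_eq hgrW b.2 w
  -- The factor alternating in `x` takes care of the dependent families `x`.
  have hzero : eval b.1 b.1 (f * alternate deg f') = 0 := by
    refine eval_eq_zero_of_forall_isGradedPI h (deg' := deg) (fun x z hx _ => ?_) b.2 b.2
    rw [map_mul]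
    by_cases hli : LinearIndependent F x
    · obtain ⟨a, rfl⟩ := exists_homogeneousBasis_coe_eq hcard hx hli
      rw [hfU a z, hp a, zero_smul, zero_mul]
    · rw [hf'.eval_alternate_eq_zero hgrU.1 hx hli z, mul_zero]
  rw [map_mul, hfW b, smul_mul_assoc] at hzero
  exact (smul_eq_zero.mp hzero).resolve_right hvw

end GradedIdentities

section CoordinateRing

variable {F γ ι U : Type*} [Field F]

theorem exists_basis_toMatrix_eq {V : Type*} [AddCommGroup V] [Module F V] [Fintype ι]
    [DecidableEq ι] (b : Module.Basis ι F V) {M N : Matrix ι ι F} (h : M * N = 1) :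
    ∃ a : Module.Basis ι F V, b.toMatrix a = M ∧ a.toMatrix b = N := by
  let a := b.map (Matrix.toLinOfInv b b h (mul_eq_one_comm.mp h))
  have hM : b.toMatrix a = M := by
    ext i j
    rw [Module.Basis.toMatrix_apply, Module.Basis.map_apply, Matrix.toLinOfInv_apply,
      Matrix.toLin_self]
    simp [Finsupp.single_apply]
  exact ⟨a, hM, left_inv_eq_right_inv (a.toMatrix_mul_toMatrix_flip b) (hM ▸ h)⟩

variable [NonUnitalNonAssocRing U] [Module F U]

theorem structConst_eq_sum [SMulCommClass F U U] [IsScalarTower F U U] [Fintype ι]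
    (a b : Module.Basis ι F U) (i j k : ι) :
    structConst a (i, j, k) = ∑ p, ∑ q, ∑ r,
      b.toMatrix a p i * b.toMatrix a q j * structConst b (p, q, r) * a.toMatrix b k r := by
  have hmul (p q : ι) : b p * b q = ∑ r, structConst b (p, q, r) • b r :=
    (b.sum_repr (b p * b q)).symm
  rw [structConst, ← b.sum_toMatrix_smul_self a i, ← b.sum_toMatrix_smul_self a j,
    Finset.sum_mul_sum]
  simp only [smul_mul_smul_comm, hmul, map_sum, map_smul, Finsupp.coe_finsetSum, Finset.sum_apply,
    Finsupp.smul_apply, smul_eq_mul, Finset.mul_sum, mul_assoc, Module.Basis.toMatrix_apply]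

variable (𝒰 : γ → Submodule F U) (deg : ι → γ) (b : Module.Basis ι F U)

/-- The coordinate ring of the affine variety of homogeneous bases `a` of `U`, as an algebra of
functions of `a`: it is generated by the entries of the two matrices of change of basis between
`a` and a reference basis `b`. -/
def coordinateRing : Subalgebra F (HomogeneousBasis 𝒰 deg → F) :=
  Algebra.adjoin F (Set.range (fun (t : ι × ι) a => b.toMatrix a.1 t.1 t.2) ∪
    Set.range (fun (t : ι × ι) a => a.1.toMatrix b t.1 t.2))

namespace coordinateRing

instance finiteType [Finite ι] : Algebra.FiniteType F (coordinateRing 𝒰 deg b) :=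
  (Subalgebra.fg_iff_finiteType _).mp <| Subalgebra.fg_def.mpr
    ⟨_, (Set.finite_range _).union (Set.finite_range _), rfl⟩

/-- The matrix whose `j`-th column consists of the `b`-coordinates of the `j`-th vector of the
generic homogeneous basis. -/
def toMatrix : Matrix ι ι (coordinateRing 𝒰 deg b) := fun i j =>
  ⟨fun a => b.toMatrix a.1 i j, Algebra.subset_adjoin (.inl ⟨(i, j), rfl⟩)⟩

/-- The inverse of `coordinateRing.toMatrix`. -/
def invMatrix : Matrix ι ι (coordinateRing 𝒰 deg b) := fun i j =>
  ⟨fun a => a.1.toMatrix b i j, Algebra.subset_adjoin (.inr ⟨(i, j), rfl⟩)⟩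

/-- The structure constants of the generic homogeneous basis. -/
def genericStructConst [Fintype ι] (t : ι × ι × ι) : coordinateRing 𝒰 deg b :=
  ∑ p, ∑ q, ∑ r, toMatrix 𝒰 deg b p t.1 * toMatrix 𝒰 deg b q t.2.1 *
    algebraMap F _ (structConst b (p, q, r)) * invMatrix 𝒰 deg b t.2.2 r

variable {𝒰 deg b}

theorem toMatrix_mul_invMatrix [Fintype ι] [DecidableEq ι] :
    toMatrix 𝒰 deg b * invMatrix 𝒰 deg b = 1 := by
  ext i j a
  have hij := congrFun₂ (b.toMatrix_mul_toMatrix_flip a.1) i j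
  rw [Matrix.mul_apply, Matrix.one_apply] at hij ⊢
  split_ifs at hij ⊢ <;> simpa [toMatrix, invMatrix] using hij

theorem toMatrix_eq_zero [DecidableEq γ] (h : DirectSum.IsInternal 𝒰) (hb : ∀ i, b i ∈ 𝒰 (deg i))
    {i j : ι} (hij : deg i ≠ deg j) : toMatrix 𝒰 deg b i j = 0 :=
  Subtype.ext <| funext fun a => (mem_iff_repr_eq_zero h hb).mp (a.2 j) i hij

variable [SMulCommClass F U U] [IsScalarTower F U U] [Fintype ι]

theorem coe_genericStructConst_apply (t : ι × ι × ι) (a : HomogeneousBasis 𝒰 deg) :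
    (genericStructConst 𝒰 deg b t : HomogeneousBasis 𝒰 deg → F) a = structConst a.1 t := by
  rw [structConst_eq_sum a.1 b]
  simp [genericStructConst, toMatrix, invMatrix]

theorem coe_aeval_genericStructConst_apply (p : MvPolynomial (ι × ι × ι) F)
    (a : HomogeneousBasis 𝒰 deg) :
    (MvPolynomial.aeval (genericStructConst 𝒰 deg b) p : HomogeneousBasis 𝒰 deg → F) a =
      MvPolynomial.eval (structConst a.1) p := by
  let evalAt : coordinateRing 𝒰 deg b →ₐ[F] F :=
    (Pi.evalAlgHom F (fun _ => F) a).comp (coordinateRing 𝒰 deg b).val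
  have hevalAt (t : ι × ι × ι) : evalAt (genericStructConst 𝒰 deg b t) = structConst a.1 t :=
    coe_genericStructConst_apply t a
  calc evalAt (MvPolynomial.aeval (genericStructConst 𝒰 deg b) p)
      = MvPolynomial.aeval (fun t => evalAt (genericStructConst 𝒰 deg b t)) p :=
        MvPolynomial.comp_aeval_apply _ _ p
    _ = MvPolynomial.eval (structConst a.1) p := by
        simp only [hevalAt, MvPolynomial.aeval_eq_eval]

theorem mem_ker_aeval_genericStructConst {p : MvPolynomial (ι × ι × ι) F} :
    p ∈ RingHom.ker (MvPolynomial.aeval (genericStructConst 𝒰 deg b)) ↔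
      ∀ a : HomogeneousBasis 𝒰 deg, MvPolynomial.eval (structConst a.1) p = 0 := by
  simp only [RingHom.mem_ker, Subtype.ext_iff, funext_iff, coe_aeval_genericStructConst_apply]
  rfl

theorem exists_structConst_eq [DecidableEq γ] (h : DirectSum.IsInternal 𝒰)
    (hb : ∀ i, b i ∈ 𝒰 (deg i)) (φ : coordinateRing 𝒰 deg b →ₐ[F] F) :
    ∃ a : HomogeneousBasis 𝒰 deg, structConst a.1 = φ ∘ genericStructConst 𝒰 deg b := by
  classical
  have hinv : φ.mapMatrix (toMatrix 𝒰 deg b) * φ.mapMatrix (invMatrix 𝒰 deg b) = 1 := by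
    rw [← map_mul, toMatrix_mul_invMatrix, map_one]
  obtain ⟨a, hba, hab⟩ := exists_basis_toMatrix_eq b hinv
  have ha (j : ι) : a j ∈ 𝒰 (deg j) := (mem_iff_repr_eq_zero h hb).mpr fun i hij => by
    rw [← Module.Basis.toMatrix_apply, hba, AlgHom.mapMatrix_apply, Matrix.map_apply,
      toMatrix_eq_zero h hb hij, map_zero]
  refine ⟨⟨a, ha⟩, funext fun ⟨i, j, k⟩ => ?_⟩
  simp only [structConst_eq_sum a b, hba, hab, AlgHom.mapMatrix_apply, Matrix.map_apply,
    Function.comp_apply, genericStructConst, map_sum, map_mul, AlgHom.commutes,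
    Algebra.algebraMap_self_apply]

end coordinateRing

end CoordinateRing

section GradedIso

variable {F γ U W : Type*} [Field F]
  [NonUnitalNonAssocRing U] [Module F U] [NonUnitalNonAssocRing W] [Module F W]
  {𝒰 : γ → Submodule F U} {𝒲 : γ → Submodule F W}

theorem IsGradedIso.symm (h : IsGradedIso F 𝒰 𝒲) : IsGradedIso F 𝒲 𝒰 := by
  obtain ⟨ψ, hmul, hmap⟩ := h
  refine ⟨ψ.symm, fun x y => ψ.injective ?_, fun g => ?_⟩
  · simp only [hmul, LinearEquiv.apply_symm_apply]
  · rw [← hmap g, ← Submodule.map_comp]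
    simp

theorem IsGradedIso.isGradedPI [SMulCommClass F U U] [IsScalarTower F U U] [SMulCommClass F W W]
    [IsScalarTower F W W] (h : IsGradedIso F 𝒰 𝒲)
    {f : FreeNonUnitalNonAssocAlgebra F (γ × ℕ)} (hf : IsGradedPI F 𝒲 f) : IsGradedPI F 𝒰 f := by
  obtain ⟨ψ, hmul, hmap⟩ := h
  intro v hv
  let φ : U →ₙₐ[F] W := { ψ with map_zero' := map_zero ψ, map_mul' := hmul }
  have hφ : φ (FreeNonUnitalNonAssocAlgebra.lift F v f) = 0 := by
    rw [map_lift_eq_lift_comp]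
    exact hf _ fun p => hmap p.1 ▸ Submodule.mem_map_of_mem (hv p)
  exact (map_eq_zero_iff ψ ψ.injective).mp hφ

theorem isGradedIso_of_structConst_eq {ι : Type*} [DecidableEq γ] [SMulCommClass F U U]
    [IsScalarTower F U U] [SMulCommClass F W W] [IsScalarTower F W W] (h𝒰 : DirectSum.IsInternal 𝒰)
    (h𝒲 : DirectSum.IsInternal 𝒲) {deg : ι → γ} (a : HomogeneousBasis 𝒰 deg)
    (b : HomogeneousBasis 𝒲 deg) (h : structConst a.1 = structConst b.1) :
    IsGradedIso F 𝒰 𝒲 := by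
  let ψ : U ≃ₗ[F] W := a.1.repr ≪≫ₗ b.1.repr.symm
  have hψ (i : ι) : ψ (a.1 i) = b.1 i := by simp [ψ]
  have hmul : (LinearMap.mul F U).compr₂ ψ.toLinearMap =
      (LinearMap.mul F W).compl₁₂ ψ.toLinearMap ψ.toLinearMap :=
    a.1.ext fun i => a.1.ext fun j => b.1.repr.injective <| Finsupp.ext fun k => by
      simpa [hψ, ψ, structConst] using congrFun h (i, j, k)
  refine ⟨ψ, fun x y => LinearMap.congr_fun₂ hmul x y, fun g => Submodule.ext fun w => ?_⟩
  rw [Submodule.mem_map_equiv, mem_iff_repr_eq_zero h𝒰 a.2, mem_iff_repr_eq_zero h𝒲 b.2]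
  simp [ψ]

end GradedIso

section Classification

variable {F U W : Type*} [Field F] [IsAlgClosed F]
  [NonUnitalNonAssocRing U] [Module F U] [SMulCommClass F U U] [IsScalarTower F U U]
  [NonUnitalNonAssocRing W] [Module F W] [SMulCommClass F W W] [IsScalarTower F W W]

theorem exists_structConst_eq_structConst {γ ι : Type*} [DecidableEq γ] [Finite ι]
    {𝒰 : γ → Submodule F U} {𝒲 : γ → Submodule F W} (h𝒰 : DirectSum.IsInternal 𝒰)
    (h𝒲 : DirectSum.IsInternal 𝒲) {deg : ι → γ} (a₀ : HomogeneousBasis 𝒰 deg)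
    (b₀ : HomogeneousBasis 𝒲 deg)
    (h : ∀ p : MvPolynomial (ι × ι × ι) F,
      (∀ a : HomogeneousBasis 𝒰 deg, MvPolynomial.eval (structConst a.1) p = 0) ↔
        ∀ b : HomogeneousBasis 𝒲 deg, MvPolynomial.eval (structConst b.1) p = 0) :
    ∃ (a : HomogeneousBasis 𝒰 deg) (b : HomogeneousBasis 𝒲 deg),
      structConst a.1 = structConst b.1 := by
  have := Fintype.ofFinite ι
  have : Nonempty (HomogeneousBasis 𝒰 deg) := ⟨a₀⟩
  let f := MvPolynomial.aeval (R := F) (coordinateRing.genericStructConst 𝒰 deg a₀.1)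
  let g := MvPolynomial.aeval (R := F) (coordinateRing.genericStructConst 𝒲 deg b₀.1)
  have hker : RingHom.ker f = RingHom.ker g := Ideal.ext fun p => by
    rw [coordinateRing.mem_ker_aeval_genericStructConst, h,
      coordinateRing.mem_ker_aeval_genericStructConst]
  obtain ⟨φ, ψ, hφψ⟩ := exists_algHom_comp_eq_of_ker_eq f g hker
  obtain ⟨a, ha⟩ := coordinateRing.exists_structConst_eq h𝒰 a₀.2 φ
  obtain ⟨b, hb⟩ := coordinateRing.exists_structConst_eq h𝒲 b₀.2 ψ
  refine ⟨a, b, funext fun t => ?_⟩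
  simpa only [f, g, ha, hb, AlgHom.comp_apply, MvPolynomial.aeval_X, Function.comp_apply] using
    DFunLike.congr_fun hφψ (MvPolynomial.X t)

variable [FiniteDimensional F U] [FiniteDimensional F W]
  {𝒰 : G → Submodule F U} {𝒲 : G → Submodule F W}

theorem IsGradedSimple.finrank_le_of_forall_isGradedPI (hs : IsGradedSimple F 𝒲)
    (hgrU : IsAlgGrading F 𝒰) (hgrW : IsAlgGrading F 𝒲)
    (h : ∀ f, IsGradedPI F 𝒰 f → IsGradedPI F 𝒲 f) :
    Module.finrank F W ≤ Module.finrank F U := by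
  obtain ⟨n, deg, b, hb⟩ := exists_homogeneous_basis hgrW.1
  obtain ⟨x, -, hli⟩ := hs.exists_linearIndependent_of_forall_isGradedPI hgrU hgrW h ⟨b, hb⟩
  rw [Module.finrank_eq_card_basis b]
  exact hli.fintype_card_le_finrank

theorem IsGradedSimple.isGradedIso_of_isGradedPI_iff (hsU : IsGradedSimple F 𝒰)
    (hsW : IsGradedSimple F 𝒲) (hgrU : IsAlgGrading F 𝒰) (hgrW : IsAlgGrading F 𝒲)
    (h : ∀ f, IsGradedPI F 𝒰 f ↔ IsGradedPI F 𝒲 f) : IsGradedIso F 𝒰 𝒲 := by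
  have hUW f : IsGradedPI F 𝒰 f → IsGradedPI F 𝒲 f := (h f).mp
  have hWU f : IsGradedPI F 𝒲 f → IsGradedPI F 𝒰 f := (h f).mpr
  have hdim : Module.finrank F W = Module.finrank F U :=
    (hsW.finrank_le_of_forall_isGradedPI hgrU hgrW hUW).antisymm
      (hsU.finrank_le_of_forall_isGradedPI hgrW hgrU hWU)
  obtain ⟨n, deg, b, hb⟩ := exists_homogeneous_basis hgrW.1
  have hcardW := (Module.finrank_eq_card_basis b).symm
  have hcardU := hcardW.trans hdim
  obtain ⟨x, hx, hli⟩ := hsW.exists_linearIndependent_of_forall_isGradedPI hgrU hgrW hUW ⟨b, hb⟩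
  obtain ⟨a, -⟩ := exists_homogeneousBasis_coe_eq hcardU hx hli
  obtain ⟨a', b', hab⟩ := exists_structConst_eq_structConst hgrU.1 hgrW.1 a ⟨b, hb⟩ fun p =>
    ⟨fun hp => hsW.eval_structConst_eq_zero hgrU hgrW hUW hcardU hp,
      fun hp => hsU.eval_structConst_eq_zero hgrW hgrU hWU hcardW hp⟩
  exact isGradedIso_of_structConst_eq hgrU.1 hgrW.1 a' b' hab

end Classification

/-- **Theorem (main).** Over an algebraically closed field `F` and an abelian group `G`, two
finite-dimensional `G`-graded simple (not necessarily associative) `F`-algebras satisfy the same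
`G`-graded polynomial identities if and only if they are isomorphic as graded algebras. -/
theorem graded_simple_same_graded_identities_iff_graded_iso
    {F : Type*} [Field F] [IsAlgClosed F]
    {G : Type*} [CommGroup G] [DecidableEq G]
    {A B : Type*}
    [NonUnitalNonAssocRing A] [Module F A] [SMulCommClass F A A] [IsScalarTower F A A]
    [NonUnitalNonAssocRing B] [Module F B] [SMulCommClass F B B] [IsScalarTower F B B]
    [FiniteDimensional F A] [FiniteDimensional F B]
    (𝒜 : G → Submodule F A) (ℬ : G → Submodule F B)
    (hgrA : IsAlgGrading F 𝒜) (hgrB : IsAlgGrading F ℬ)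
    (hsimpA : IsGradedSimple F 𝒜) (hsimpB : IsGradedSimple F ℬ) :
    (∀ f : FreeNonUnitalNonAssocAlgebra F (G × ℕ), IsGradedPI F 𝒜 f ↔ IsGradedPI F ℬ f) ↔
      IsGradedIso F 𝒜 ℬ := by
  constructor
  · exact hsimpA.isGradedIso_of_isGradedPI_iff hsimpB hgrA hgrB
  · exact fun hiso f => ⟨hiso.symm.isGradedPI, hiso.isGradedPI⟩

end
end

section
/- Let U and V be F-algebras (not necessarily associative). If U and V satisfy the same ordinary polynomial identities, then their multiplication algebras M(U) and M(V) satisfy the same ordinary (associative) polynomial identities. -/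
noncomputable section

variable (K : Type*) [Field K]

/-- `f` is an ordinary (associative) polynomial identity of the subset `S` of the associative
unital algebra `B`. -/
def IsAssocPIOn {B : Type*} [Ring B] [Algebra K B] (S : Set B) (f : FreeAlgebra K ℕ) : Prop :=
  ∀ v : ℕ → B, (∀ i, v i ∈ S) → FreeAlgebra.lift K v f = 0

end

/-!
Every algebra `B` is a quotient `π : P → B` of a free algebra `P`. Along `π`, every element of
`M(B)` lifts to an element of `M(P)`, and along any homomorphism `P → A` every element of `M(P)`
descends to an element of `M(A)`. Evaluating an associative polynomial `f` at lifts `pᵢ ∈ M(P)` and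
applying the result to `x ∈ P` yields a nonassociative polynomial `f(p) x`. If `f` is an identity of
`M(A)`, then `f(p) x` is an identity of `A`, hence of `B`, and this says that `f` vanishes on
`M(B)`.
-/

section Adjoin

variable {R A : Type*} [CommSemiring R] [NonUnitalNonAssocSemiring A] [Module R A]
  [IsScalarTower R A A] [SMulCommClass R A A]

open NonUnitalAlgebra in
theorem exists_finite_subset_mem_adjoin {s : Set A} {x : A} (hx : x ∈ adjoin R s) :
    ∃ t ⊆ s, t.Finite ∧ x ∈ adjoin R t := by
  induction hx using adjoin_induction with
  | mem x hx =>
    exact ⟨{x}, Set.singleton_subset_iff.mpr hx, Set.finite_singleton x,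
      self_mem_adjoin_singleton R x⟩
  | zero => exact ⟨∅, Set.empty_subset s, Set.finite_empty, zero_mem _⟩
  | smul r x _ ihx =>
    obtain ⟨t, hts, ht, hxt⟩ := ihx
    exact ⟨t, hts, ht, SMulMemClass.smul_mem r hxt⟩
  | add x y _ _ ihx ihy =>
    obtain ⟨t, hts, ht, hxt⟩ := ihx
    obtain ⟨u, hus, hu, hyu⟩ := ihy
    exact ⟨t ∪ u, Set.union_subset hts hus, ht.union hu,
      add_mem (adjoin_mono Set.subset_union_left hxt) (adjoin_mono Set.subset_union_right hyu)⟩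
  | mul x y _ _ ihx ihy =>
    obtain ⟨t, hts, ht, hxt⟩ := ihx
    obtain ⟨u, hus, hu, hyu⟩ := ihy
    exact ⟨t ∪ u, Set.union_subset hts hus, ht.union hu,
      mul_mem (adjoin_mono Set.subset_union_left hxt) (adjoin_mono Set.subset_union_right hyu)⟩

end Adjoin

section FreeNonassociative

open FreeNonUnitalNonAssocAlgebra

variable {R X Y A B : Type*} [CommSemiring R]
  [NonUnitalNonAssocSemiring A] [Module R A] [IsScalarTower R A A] [SMulCommClass R A A]
  [NonUnitalNonAssocSemiring B] [Module R B] [IsScalarTower R B B] [SMulCommClass R B B]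

variable (R X) in
theorem adjoin_range_freeNonUnitalNonAssocAlgebra_of :
    NonUnitalAlgebra.adjoin R (Set.range (of R : X → FreeNonUnitalNonAssocAlgebra R X)) = ⊤ := by
  set S := NonUnitalAlgebra.adjoin R (Set.range (of R : X → FreeNonUnitalNonAssocAlgebra R X))
  let toS : FreeNonUnitalNonAssocAlgebra R X →ₙₐ[R] S :=
    lift R fun x ↦ ⟨of R x, NonUnitalAlgebra.subset_adjoin R ⟨x, rfl⟩⟩
  have subtype_comp_toS : (NonUnitalSubalgebraClass.subtype S).comp toS = NonUnitalAlgHom.id R _ :=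
    hom_ext R fun x ↦ by simp [toS]
  refine NonUnitalAlgebra.eq_top_iff.mpr fun g ↦ ?_
  have toS_apply : (toS g : FreeNonUnitalNonAssocAlgebra R X) = g :=
    DFunLike.congr_fun subtype_comp_toS g
  exact toS_apply ▸ (toS g).2

theorem exists_finite_mem_adjoin_image_of (g : FreeNonUnitalNonAssocAlgebra R X) :
    ∃ s : Set X, s.Finite ∧ g ∈ NonUnitalAlgebra.adjoin R (of R '' s) := by
  have hg : g ∈ NonUnitalAlgebra.adjoin R (of R '' (Set.univ : Set X)) := by
    rw [Set.image_univ, adjoin_range_freeNonUnitalNonAssocAlgebra_of]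
    exact NonUnitalAlgebra.mem_top
  obtain ⟨s, -, hs⟩ :=
    Set.exists_subset_image_finite_and.mp (exists_finite_subset_mem_adjoin hg)
  exact ⟨s, hs⟩

theorem lift_congr_of_mem_adjoin_image_of {s : Set X} {g : FreeNonUnitalNonAssocAlgebra R X}
    (hg : g ∈ NonUnitalAlgebra.adjoin R (of R '' s)) {u v : X → A} (huv : s.EqOn u v) :
    lift R u g = lift R v g := by
  suffices NonUnitalAlgebra.adjoin R (of R '' s) ≤
      NonUnitalAlgHom.equalizer (lift R u) (lift R v) from this hg
  refine NonUnitalAlgebra.adjoin_le ?_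
  rintro _ ⟨x, hx, rfl⟩
  simpa using huv hx

theorem lift_lift_of_comp (u : Y → A) (φ : X → Y) (g : FreeNonUnitalNonAssocAlgebra R X) :
    lift R u (lift R (of R ∘ φ) g) = lift R (u ∘ φ) g := by
  suffices (lift R u).comp (lift R (of R ∘ φ)) = lift R (u ∘ φ) from DFunLike.congr_fun this g
  exact hom_ext R fun x ↦ by simp

/-- Only finitely many variables occur in `g`, so they can be renamed injectively to elements
of `ℕ`. -/
theorem lift_eq_zero_of_forall_nat_identity
    (hAB : ∀ f : FreeNonUnitalNonAssocAlgebra R ℕ,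
      (∀ v : ℕ → A, lift R v f = 0) → ∀ v : ℕ → B, lift R v f = 0)
    {g : FreeNonUnitalNonAssocAlgebra R X} (hg : ∀ v : X → A, lift R v g = 0) (v : X → B) :
    lift R v g = 0 := by
  obtain ⟨s, hs, hgs⟩ := exists_finite_mem_adjoin_image_of g
  obtain ⟨code, hcode⟩ := Set.countable_iff_exists_injOn.mp hs.countable
  let w : ℕ → B := Function.extend (s.domRestrict code) (s.domRestrict v) 0
  have hw : s.EqOn v (w ∘ code) := fun x hx ↦
    (hcode.injective.extend_apply (s.domRestrict v) 0 ⟨x, hx⟩).symm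
  rw [lift_congr_of_mem_adjoin_image_of hgs hw, ← lift_lift_of_comp]
  refine hAB _ (fun u ↦ ?_) w
  rw [lift_lift_of_comp]
  exact hg (u ∘ code)

end FreeNonassociative

section Intertwiners

variable {R M N : Type*} [CommSemiring R] [AddCommMonoid M] [Module R M]
  [AddCommMonoid N] [Module R N]

/-- The pairs `(p, q)` of endomorphisms intertwined by `φ : M → N`, i.e. with `q ∘ φ = φ ∘ p`.
They form a subalgebra, so polynomial expressions in intertwined endomorphisms are intertwined. -/
def intertwiners (φ : M →ₗ[R] N) : Subalgebra R (Module.End R M × Module.End R N) where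
  carrier := {p | ∀ x, p.2 (φ x) = φ (p.1 x)}
  mul_mem' hp hq x := by simp [hp _, hq _]
  add_mem' hp hq x := by simp [hp _, hq _]
  algebraMap_mem' r x := by simp

theorem prodMk_freeAlgebra_lift_mem {S T ι : Type*}
    [Semiring S] [Algebra R S] [Semiring T] [Algebra R T]
    {C : Subalgebra R (S × T)} {p : ι → S} {q : ι → T} (hpq : ∀ i, (p i, q i) ∈ C)
    (f : FreeAlgebra R ι) : (FreeAlgebra.lift R p f, FreeAlgebra.lift R q f) ∈ C := by
  induction f using FreeAlgebra.induction with
  | grade0 r => simpa using C.algebraMap_mem r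
  | grade1 i => simpa using hpq i
  | mul f g hf hg => simpa using C.mul_mem hf hg
  | add f g hf hg => simpa using C.add_mem hf hg

end Intertwiners

section MultAlg

open NonUnitalAlgebra

variable {F P A : Type*} [Field F]
  [NonUnitalNonAssocSemiring P] [Module F P] [SMulCommClass F P P] [IsScalarTower F P P]
  [NonUnitalNonAssocSemiring A] [Module F A] [SMulCommClass F A A] [IsScalarTower F A A]

theorem mulLeft_mem_multAlg (a : A) : LinearMap.mulLeft F a ∈ MultAlg F (A := A) :=
  subset_adjoin F (Or.inl ⟨a, rfl⟩)

theorem mulRight_mem_multAlg (a : A) : LinearMap.mulRight F a ∈ MultAlg F (A := A) :=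
  subset_adjoin F (Or.inr ⟨a, rfl⟩)

/-- The subalgebra of `M(P) × M(A)` of pairs intertwined by `ψ : P → A`. Seen as a relation, it
replaces a homomorphism `M(P) → M(A)`, which `ψ` need not induce unless it is surjective. -/
def multIntertwiners (ψ : P →ₙₐ[F] A) :
    NonUnitalSubalgebra F (Module.End F P × Module.End F A) :=
  (intertwiners (ψ : P →ₗ[F] A)).toNonUnitalSubalgebra ⊓
    (MultAlg F (A := P)).prod (MultAlg F (A := A))

theorem mulLeft_mem_multIntertwiners (ψ : P →ₙₐ[F] A) (a : P) :
    (LinearMap.mulLeft F a, LinearMap.mulLeft F (ψ a)) ∈ multIntertwiners ψ :=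
  ⟨fun x ↦ (map_mul ψ a x).symm, mulLeft_mem_multAlg a, mulLeft_mem_multAlg (ψ a)⟩

theorem mulRight_mem_multIntertwiners (ψ : P →ₙₐ[F] A) (a : P) :
    (LinearMap.mulRight F a, LinearMap.mulRight F (ψ a)) ∈ multIntertwiners ψ :=
  ⟨fun x ↦ (map_mul ψ x a).symm, mulRight_mem_multAlg a, mulRight_mem_multAlg (ψ a)⟩

theorem exists_right_mem_multIntertwiners (ψ : P →ₙₐ[F] A) {p : Module.End F P}
    (hp : p ∈ MultAlg F (A := P)) : ∃ q, (p, q) ∈ multIntertwiners ψ := by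
  have multAlg_le : MultAlg F (A := P) ≤
      (multIntertwiners ψ).map (NonUnitalAlgHom.fst F (Module.End F P) (Module.End F A)) := by
    refine adjoin_le ?_
    rintro _ (⟨a, rfl⟩ | ⟨a, rfl⟩)
    · exact ⟨_, mulLeft_mem_multIntertwiners ψ a, rfl⟩
    · exact ⟨_, mulRight_mem_multIntertwiners ψ a, rfl⟩
  obtain ⟨⟨_, q⟩, hpq, rfl⟩ := multAlg_le hp
  exact ⟨q, hpq⟩

theorem exists_left_mem_multIntertwiners {ψ : P →ₙₐ[F] A} (hψ : Function.Surjective ψ)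
    {q : Module.End F A} (hq : q ∈ MultAlg F (A := A)) : ∃ p, (p, q) ∈ multIntertwiners ψ := by
  have multAlg_le : MultAlg F (A := A) ≤
      (multIntertwiners ψ).map (NonUnitalAlgHom.snd F (Module.End F P) (Module.End F A)) := by
    refine adjoin_le ?_
    rintro _ (⟨b, rfl⟩ | ⟨b, rfl⟩) <;> obtain ⟨a, rfl⟩ := hψ b
    · exact ⟨_, mulLeft_mem_multIntertwiners ψ a, rfl⟩
    · exact ⟨_, mulRight_mem_multIntertwiners ψ a, rfl⟩
  obtain ⟨⟨p, _⟩, hpq, rfl⟩ := multAlg_le hq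
  exact ⟨p, hpq⟩

theorem lift_apply_map_of_mem_multIntertwiners {ι : Type*} {ψ : P →ₙₐ[F] A}
    {p : ι → Module.End F P} {q : ι → Module.End F A}
    (hpq : ∀ i, (p i, q i) ∈ multIntertwiners ψ) (f : FreeAlgebra F ι) (x : P) :
    FreeAlgebra.lift F q f (ψ x) = ψ (FreeAlgebra.lift F p f x) :=
  prodMk_freeAlgebra_lift_mem (fun i ↦ (hpq i).1) f x

end MultAlg

section Identities

variable {F P A B : Type*} [Field F]
  [NonUnitalNonAssocSemiring P] [Module F P] [SMulCommClass F P P] [IsScalarTower F P P]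
  [NonUnitalNonAssocRing A] [Module F A] [SMulCommClass F A A] [IsScalarTower F A A]
  [NonUnitalNonAssocRing B] [Module F B] [SMulCommClass F B B] [IsScalarTower F B B]

theorem map_lift_apply_eq_zero_of_isAssocPIOn_multAlg {f : FreeAlgebra F ℕ}
    (hf : IsAssocPIOn F (MultAlg F (A := A) : Set (Module.End F A)) f)
    {p : ℕ → Module.End F P} (hp : ∀ i, p i ∈ MultAlg F (A := P)) (ψ : P →ₙₐ[F] A) (x : P) :
    ψ (FreeAlgebra.lift F p f x) = 0 := by
  choose q hpq using fun i ↦ exists_right_mem_multIntertwiners ψ (hp i)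
  have hfq : FreeAlgebra.lift F q f = 0 := hf q fun i ↦ (hpq i).2.2
  rw [← lift_apply_map_of_mem_multIntertwiners hpq, hfq, LinearMap.zero_apply]

open FreeNonUnitalNonAssocAlgebra in
theorem isAssocPIOn_multAlg_of_forall_isPI_imp
    (hAB : ∀ g : FreeNonUnitalNonAssocAlgebra F ℕ, IsPI F (A := A) g → IsPI F (A := B) g)
    {f : FreeAlgebra F ℕ} (hf : IsAssocPIOn F (MultAlg F (A := A) : Set (Module.End F A)) f) :
    IsAssocPIOn F (MultAlg F (A := B) : Set (Module.End F B)) f := by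
  intro v hv
  let π : FreeNonUnitalNonAssocAlgebra F B →ₙₐ[F] B := lift F id
  have π_of (b : B) : π (of F b) = b := lift_of_apply F id b
  have π_surjective : Function.Surjective π := fun b ↦ ⟨of F b, π_of b⟩
  choose p hpv using fun i ↦ exists_left_mem_multIntertwiners π_surjective (hv i)
  ext b
  calc FreeAlgebra.lift F v f b
    _ = FreeAlgebra.lift F v f (π (of F b)) := by rw [π_of]
    _ = π (FreeAlgebra.lift F p f (of F b)) := lift_apply_map_of_mem_multIntertwiners hpv f _
    _ = 0 := lift_eq_zero_of_forall_nat_identity hAB (fun u ↦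
      map_lift_apply_eq_zero_of_isAssocPIOn_multAlg hf (fun i ↦ (hpv i).2.1) (lift F u) _) id

end Identities

/-- If two (not necessarily associative) `F`-algebras satisfy the same ordinary polynomial
identities, then their multiplication algebras satisfy the same ordinary associative polynomial
identities. -/
theorem mult_algebras_satisfy_same_identities
    {F : Type*} [Field F] {A B : Type*}
    [NonUnitalNonAssocRing A] [Module F A] [SMulCommClass F A A] [IsScalarTower F A A]
    [NonUnitalNonAssocRing B] [Module F B] [SMulCommClass F B B] [IsScalarTower F B B]
    (hsame : ∀ f : FreeNonUnitalNonAssocAlgebra F ℕ, IsPI F (A := A) f ↔ IsPI F (A := B) f) :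
    ∀ f : FreeAlgebra F ℕ,
      IsAssocPIOn F (MultAlg F (A := A) : Set (Module.End F A)) f ↔
        IsAssocPIOn F (MultAlg F (A := B) : Set (Module.End F B)) f := by
  exact fun _ ↦ ⟨isAssocPIOn_multAlg_of_forall_isPI_imp fun g ↦ (hsame g).mp,
    isAssocPIOn_multAlg_of_forall_isPI_imp fun g ↦ (hsame g).mpr⟩
end

section
/- Let F ⊆ F̃ be a field extension, G an abelian group, Ũ a G-graded F̃-algebra, and U a homogeneous F-subalgebra of Ũ such that F̃·U = Ũ. Let M be the F-subalgebra of M(Ũ) generated by the left and right multiplications by elements of U. Then M is a homogeneous subalgebra of M(Ũ) with F̃·M = M(Ũ), and the map ψ: M → M(U) defined by ψ(m)(x) = m(x) for m ∈ M, x ∈ U, is an isomorphism of G-graded F-algebras. -/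
noncomputable section

variable (F : Type*) [Field F] (FF : Type*) [Field FF] [Algebra F FF]
variable {G : Type*} [CommGroup G] [DecidableEq G]
variable {tU : Type*} [NonUnitalNonAssocSemiring tU] [Module FF tU]
  [SMulCommClass FF tU tU] [IsScalarTower FF tU tU]
  [Module F tU] [IsScalarTower F FF tU] [SMulCommClass FF F tU]
  [SMulCommClass F tU tU] [IsScalarTower F tU tU]

/-- The `F`-subalgebra `M` of `M(Ũ)` generated by the left and right multiplications by elements
of the subalgebra `S`. -/
def multSubalgOn (S : NonUnitalSubalgebra F tU) : NonUnitalSubalgebra F (Module.End FF tU) :=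
  NonUnitalAlgebra.adjoin F
    ((fun a => LinearMap.mulLeft FF a) '' (S : Set tU) ∪
      (fun a => LinearMap.mulRight FF a) '' (S : Set tU))

/-! Products of homogeneous multiplications are homogeneous, so `M` is homogeneous, and the
`F̃`-span of the `F`-algebra generated by a set is the `F̃`-algebra it generates, so `F̃·M = M(Ũ)`.
The map `ψ` is injective because an `F̃`-linear map is determined by its values on the spanning set
`U`, and it is onto because it carries the generators of `M` to those of `M(U)`. Finally, the
independence of the components `Ũ_g` forces `Ũ_g = F̃·(U ∩ Ũ_g)`, so the degree of an element of
`M` can be read off on `U`. -/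

section AdjoinSpan

variable {R E B : Type*} [CommSemiring R] [CommSemiring E] [NonUnitalSemiring B]
  [Module R B] [IsScalarTower R B B] [SMulCommClass R B B]
  [Module E B] [IsScalarTower E B B] [SMulCommClass E B B] [SMul R E] [IsScalarTower R E B]

theorem span_adjoin_eq_adjoin_toSubmodule (s : Set B) :
    Submodule.span E (NonUnitalAlgebra.adjoin R s : Set B) =
      (NonUnitalAlgebra.adjoin E s).toSubmodule := by
  rw [← NonUnitalSubalgebra.coe_toSubmodule, NonUnitalAlgebra.adjoin_eq_span,
    NonUnitalAlgebra.adjoin_eq_span, Submodule.span_span_of_tower]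

end AdjoinSpan

section AdjoinPreimage

variable {R B : Type*} [CommSemiring R] [NonUnitalSemiring B] [Module R B] [IsScalarTower R B B]
  [SMulCommClass R B B]

theorem adjoin_preimage_coe_eq_top (s : Set B) :
    NonUnitalAlgebra.adjoin R ((↑) ⁻¹' s : Set (NonUnitalAlgebra.adjoin R s)) = ⊤ := by
  let val := NonUnitalSubalgebraClass.subtype (NonUnitalAlgebra.adjoin R s)
  have s_subset_range : s ⊆ Set.range val := fun b hb =>
    ⟨⟨b, NonUnitalAlgebra.subset_adjoin R hb⟩, rfl⟩
  apply NonUnitalSubalgebra.map_injective (f := val) Subtype.val_injective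
  calc (NonUnitalAlgebra.adjoin R (val ⁻¹' s)).map val
    _ = NonUnitalAlgebra.adjoin R s := by
      rw [NonUnitalAlgHom.map_adjoin, Set.image_preimage_eq_of_subset s_subset_range]
    _ = (⊤ : NonUnitalSubalgebra R _).map val := by
      rw [NonUnitalAlgebra.map_top, NonUnitalSubalgebra.range_val]

end AdjoinPreimage

section AdjoinHomogeneous

variable {R B ι : Type*} [CommSemiring R] [Semiring B] [Algebra R B] [Mul ι]
  {ℬ : ι → Submodule R B}

theorem mul_mem_iSup_inf (hℬ : ∀ i j, ∀ a ∈ ℬ i, ∀ b ∈ ℬ j, a * b ∈ ℬ (i * j))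
    (N : NonUnitalSubalgebra R B) {a b : B} (ha : a ∈ ⨆ i, N.toSubmodule ⊓ ℬ i)
    (hb : b ∈ ⨆ i, N.toSubmodule ⊓ ℬ i) : a * b ∈ ⨆ i, N.toSubmodule ⊓ ℬ i := by
  refine Submodule.mul_le.1 ?_ a ha b hb
  simp only [Submodule.iSup_mul, Submodule.mul_iSup, iSup_le_iff, Submodule.mul_le]
  exact fun j i x hx y hy =>
    Submodule.mem_iSup_of_mem (i * j) ⟨N.mul_mem hx.1 hy.1, hℬ i j x hx.2 y hy.2⟩

theorem adjoin_toSubmodule_eq_iSup_inf (hℬ : ∀ i j, ∀ a ∈ ℬ i, ∀ b ∈ ℬ j, a * b ∈ ℬ (i * j))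
    {s : Set B} (hs : s ⊆ (⨆ i, (NonUnitalAlgebra.adjoin R s).toSubmodule ⊓ ℬ i : Submodule R B)) :
    (NonUnitalAlgebra.adjoin R s).toSubmodule =
      ⨆ i, (NonUnitalAlgebra.adjoin R s).toSubmodule ⊓ ℬ i := by
  let homogeneousPart : NonUnitalSubalgebra R B :=
    { (⨆ i, (NonUnitalAlgebra.adjoin R s).toSubmodule ⊓ ℬ i : Submodule R B) with
      mul_mem' := mul_mem_iSup_inf hℬ _ }
  exact le_antisymm (NonUnitalAlgebra.adjoin_le (S := homogeneousPart) hs)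
    (iSup_le fun _ => inf_le_left)

end AdjoinHomogeneous

section Component

variable {R E V ι : Type*} [Semiring R] [Ring E] [AddCommMonoid V] [Module R V] [Module E V]
  [SMul R E] [IsScalarTower R E V] {𝒜 : ι → Submodule E V} {W : Submodule R V}

theorem span_inter_eq_of_iSupIndep (h𝒜 : iSupIndep 𝒜)
    (hW : W = ⨆ i, W ⊓ (𝒜 i).restrictScalars R) (hspan : Submodule.span E (W : Set V) = ⊤) (i : ι) :
    Submodule.span E ((W : Set V) ∩ 𝒜 i) = 𝒜 i := by
  -- Over a ring `V` has negatives, so its submodule lattice is modular.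
  let := Module.addCommMonoidToAddCommGroup E (M := V)
  have iSup_span_eq_top : ⨆ j, Submodule.span E ((W : Set V) ∩ 𝒜 j) = ⊤ := by
    have W_le : W ≤ (⨆ j, Submodule.span E ((W : Set V) ∩ 𝒜 j)).restrictScalars R :=
      hW.le.trans <| iSup_le fun j _ hx => Submodule.mem_iSup_of_mem j (Submodule.subset_span hx)
    exact top_le_iff.1 (hspan.ge.trans (Submodule.span_le.2 W_le))
  exact congrFun ((h𝒜.le_iff_eq_of_iSup_eq_top iSup_span_eq_top).1
    fun j => Submodule.span_le.2 Set.inter_subset_right) i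

end Component

section EndGrading

variable {K G A : Type*} [Field K] [CommGroup G] [NonUnitalNonAssocSemiring A] [Module K A]
  {𝒜 : G → Submodule K A} {g h : G}

theorem mulLeft_mem_endGrading [SMulCommClass K A A]
    (h𝒜 : ∀ g h, ∀ a ∈ 𝒜 g, ∀ b ∈ 𝒜 h, a * b ∈ 𝒜 (g * h)) {a : A} (ha : a ∈ 𝒜 g) :
    LinearMap.mulLeft K a ∈ endGrading K 𝒜 g :=
  fun k x hx => h𝒜 g k a ha x hx

theorem mulRight_mem_endGrading [IsScalarTower K A A]
    (h𝒜 : ∀ g h, ∀ a ∈ 𝒜 g, ∀ b ∈ 𝒜 h, a * b ∈ 𝒜 (g * h)) {a : A} (ha : a ∈ 𝒜 g) :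
    LinearMap.mulRight K a ∈ endGrading K 𝒜 g :=
  fun k x hx => mul_comm k g ▸ h𝒜 k g x hx a ha

theorem mul_mem_endGrading {φ χ : Module.End K A} (hφ : φ ∈ endGrading K 𝒜 g)
    (hχ : χ ∈ endGrading K 𝒜 h) : φ * χ ∈ endGrading K 𝒜 (g * h) :=
  fun k x hx => (mul_assoc g h k).symm ▸ hφ _ _ (hχ k x hx)

theorem mem_endGrading_iff_of_span_inter_eq {s : Set A}
    (hs : ∀ g, Submodule.span K (s ∩ 𝒜 g) = 𝒜 g) {φ : Module.End K A} :
    φ ∈ endGrading K 𝒜 h ↔ ∀ g, ∀ x ∈ s, x ∈ 𝒜 g → φ x ∈ 𝒜 (h * g) := by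
  refine ⟨fun hφ g x _ hx => hφ g x hx, fun hφ g => ?_⟩
  have component_le_comap : 𝒜 g ≤ (𝒜 (h * g)).comap φ :=
    (hs g).ge.trans (Submodule.span_le.2 fun x hx => hφ g x hx.1 hx.2)
  exact component_le_comap

end EndGrading

section MultAlg

variable {K A : Type*} [Field K] [NonUnitalNonAssocSemiring A] [Module K A]
  [SMulCommClass K A A] [IsScalarTower K A A]

theorem adjoin_mulLeft_union_mulRight_eq_multAlg {s : Set A}
    (hs : Submodule.span K s = ⊤) :
    NonUnitalAlgebra.adjoin K (LinearMap.mulLeft K '' s ∪ LinearMap.mulRight K '' s) =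
      MultAlg K (A := A) := by
  set N := NonUnitalAlgebra.adjoin K (LinearMap.mulLeft K '' s ∪ LinearMap.mulRight K '' s)
  have mulLeft_mem : ⊤ ≤ N.toSubmodule.comap (LinearMap.mul K A) :=
    hs.ge.trans <| Submodule.span_le.2 fun a ha =>
      NonUnitalAlgebra.subset_adjoin K (.inl ⟨a, ha, rfl⟩)
  have mulRight_mem : ⊤ ≤ N.toSubmodule.comap (LinearMap.mul K A).flip :=
    hs.ge.trans <| Submodule.span_le.2 fun a ha =>
      NonUnitalAlgebra.subset_adjoin K (.inr ⟨a, ha, rfl⟩)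
  refine le_antisymm (NonUnitalAlgebra.adjoin_mono (Set.union_subset_union
    (Set.image_subset_range _ _) (Set.image_subset_range _ _))) (NonUnitalAlgebra.adjoin_le ?_)
  rintro _ (⟨a, rfl⟩ | ⟨a, rfl⟩)
  exacts [mulLeft_mem trivial, mulRight_mem trivial]

end MultAlg

section MultSubalgOn

variable {F FF G tU : Type*} [Field F] [Field FF] [Algebra F FF] [CommGroup G]
  [NonUnitalNonAssocSemiring tU] [Module FF tU] [SMulCommClass FF tU tU] [IsScalarTower FF tU tU]
  [Module F tU] [IsScalarTower F FF tU] [SMulCommClass FF F tU] {S : NonUnitalSubalgebra F tU}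

theorem mulLeft_mem_multSubalgOn {a : tU} (ha : a ∈ S) :
    LinearMap.mulLeft FF a ∈ multSubalgOn F FF S :=
  NonUnitalAlgebra.subset_adjoin F (.inl ⟨a, ha, rfl⟩)

theorem mulRight_mem_multSubalgOn {a : tU} (ha : a ∈ S) :
    LinearMap.mulRight FF a ∈ multSubalgOn F FF S :=
  NonUnitalAlgebra.subset_adjoin F (.inr ⟨a, ha, rfl⟩)

theorem span_multSubalgOn (hspan : Submodule.span FF (S : Set tU) = ⊤) :
    Submodule.span FF (multSubalgOn F FF S : Set (Module.End FF tU)) =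
      (MultAlg FF (A := tU)).toSubmodule :=
  (span_adjoin_eq_adjoin_toSubmodule _).trans
    (congrArg _ (adjoin_mulLeft_union_mulRight_eq_multAlg hspan))

theorem multSubalgOn_eq_iSup_inf_endGrading {𝒜 : G → Submodule FF tU}
    (h𝒜 : ∀ g h, ∀ a ∈ 𝒜 g, ∀ b ∈ 𝒜 h, a * b ∈ 𝒜 (g * h))
    (hS : S.toSubmodule = ⨆ g, S.toSubmodule ⊓ (𝒜 g).restrictScalars F) :
    (multSubalgOn F FF S).toSubmodule =
      ⨆ h, (multSubalgOn F FF S).toSubmodule ⊓ (endGrading FF 𝒜 h).restrictScalars F := by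
  set homogeneousPart :=
    ⨆ h, (multSubalgOn F FF S).toSubmodule ⊓ (endGrading FF 𝒜 h).restrictScalars F
  have mulLeft_mem :
      S.toSubmodule ≤ homogeneousPart.comap ((LinearMap.mul FF tU).restrictScalars F) :=
    hS.le.trans <| iSup_le fun g a ha => Submodule.mem_iSup_of_mem g
      ⟨mulLeft_mem_multSubalgOn ha.1, mulLeft_mem_endGrading h𝒜 ha.2⟩
  have mulRight_mem :
      S.toSubmodule ≤ homogeneousPart.comap ((LinearMap.mul FF tU).flip.restrictScalars F) :=
    hS.le.trans <| iSup_le fun g a ha => Submodule.mem_iSup_of_mem g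
      ⟨mulRight_mem_multSubalgOn ha.1, mulRight_mem_endGrading h𝒜 ha.2⟩
  refine adjoin_toSubmodule_eq_iSup_inf (fun _ _ _ hφ _ hχ => mul_mem_endGrading hφ hχ) ?_
  rintro _ (⟨a, ha, rfl⟩ | ⟨a, ha, rfl⟩)
  exacts [mulLeft_mem ha, mulRight_mem ha]

theorem map_mem_of_mem_multSubalgOn {m : Module.End FF tU} (hm : m ∈ multSubalgOn F FF S) :
    ∀ x ∈ S, m x ∈ S := by
  induction hm using NonUnitalAlgebra.adjoin_induction with
  | mem _ hgen =>
    rcases hgen with ⟨a, ha, rfl⟩ | ⟨a, ha, rfl⟩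
    exacts [fun x hx => S.mul_mem ha hx, fun x hx => S.mul_mem hx ha]
  | add _ _ _ _ hm hn => exact fun x hx => S.add_mem (hm x hx) (hn x hx)
  | zero => exact fun _ _ => S.zero_mem
  | mul _ _ _ _ hm hn => exact fun x hx => hm _ (hn x hx)
  | smul c _ _ hm => exact fun x hx => SMulMemClass.smul_mem c (hm x hx)

variable (S) in
/-- The restriction map `ψ : M → End(U)`, with `M = multSubalgOn F FF S` and `U = S`. -/
def multRestrict : multSubalgOn F FF S →ₙₐ[F] Module.End F S where
  toFun m := (m.1.restrictScalars F).restrict (p := S.toSubmodule) (q := S.toSubmodule)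
    (map_mem_of_mem_multSubalgOn (FF := FF) m.2)
  map_smul' _ _ := rfl
  map_zero' := rfl
  map_add' _ _ := rfl
  map_mul' _ _ := rfl

@[simp]
theorem coe_multRestrict_apply (m : multSubalgOn F FF S) (x : S) :
    (multRestrict S m x : tU) = m.1 x :=
  rfl

theorem multRestrict_injective (hspan : Submodule.span FF (S : Set tU) = ⊤) :
    Function.Injective (multRestrict (FF := FF) S) :=
  fun _ _ h => Subtype.ext <| LinearMap.ext_on hspan fun x hx =>
    congrArg Subtype.val (LinearMap.congr_fun h ⟨x, hx⟩)

theorem mem_endGrading_iff_multRestrict {𝒜 : G → Submodule FF tU} (h𝒜 : iSupIndep 𝒜)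
    (hS : S.toSubmodule = ⨆ g, S.toSubmodule ⊓ (𝒜 g).restrictScalars F)
    (hspan : Submodule.span FF (S : Set tU) = ⊤) (m : multSubalgOn F FF S) (h : G) :
    m.1 ∈ endGrading FF 𝒜 h ↔
      ∀ g, ∀ x : S, (x : tU) ∈ 𝒜 g → (multRestrict S m x : tU) ∈ 𝒜 (h * g) := by
  rw [mem_endGrading_iff_of_span_inter_eq (span_inter_eq_of_iSupIndep h𝒜 hS hspan)]
  exact forall_congr' fun _ => ⟨fun hm x => hm x x.2, fun hm x hx => hm ⟨x, hx⟩⟩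

end MultSubalgOn

section MultRestrictRange

variable {F FF} {S : NonUnitalSubalgebra F tU}

theorem image_multRestrict_generators :
    multRestrict S '' (Subtype.val ⁻¹' (LinearMap.mulLeft FF '' (S : Set tU) ∪
      LinearMap.mulRight FF '' (S : Set tU))) =
      Set.range (LinearMap.mulLeft F (A := S)) ∪ Set.range (LinearMap.mulRight F (A := S)) := by
  ext φ
  constructor
  · rintro ⟨⟨_, _⟩, ⟨a, ha, rfl⟩ | ⟨a, ha, rfl⟩, rfl⟩
    exacts [.inl ⟨⟨a, ha⟩, rfl⟩, .inr ⟨⟨a, ha⟩, rfl⟩]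
  · rintro (⟨a, rfl⟩ | ⟨a, rfl⟩)
    exacts [⟨⟨_, mulLeft_mem_multSubalgOn a.2⟩, .inl ⟨a, a.2, rfl⟩, rfl⟩,
      ⟨⟨_, mulRight_mem_multSubalgOn a.2⟩, .inr ⟨a, a.2, rfl⟩, rfl⟩]

theorem range_multRestrict :
    NonUnitalAlgHom.range (multRestrict (FF := FF) S) = MultAlg F (A := S) := by
  have adjoin_generators_eq_top :
      NonUnitalAlgebra.adjoin F (Subtype.val ⁻¹' (LinearMap.mulLeft FF '' (S : Set tU) ∪
        LinearMap.mulRight FF '' (S : Set tU)) : Set (multSubalgOn F FF S)) = ⊤ :=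
    adjoin_preimage_coe_eq_top _
  rw [← NonUnitalAlgebra.map_top, ← adjoin_generators_eq_top, NonUnitalAlgHom.map_adjoin,
    image_multRestrict_generators, MultAlg]

end MultRestrictRange

/-- Let `F ⊆ FF` be a field extension, `Ũ` a `G`-graded `FF`-algebra (`G` abelian), `U = S` a
homogeneous `F`-subalgebra of `Ũ` with `FF·U = Ũ`, and `M` the `F`-subalgebra of `M(Ũ)` generated
by left and right multiplications by elements of `U`.  Then `M` is a homogeneous subalgebra of
`M(Ũ)` with `FF·M = M(Ũ)`, and restriction to `U` gives an isomorphism of `G`-graded `F`-algebras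
`ψ : M → M(U)`. -/
theorem mult_subalgebra_restriction_iso
    (𝒜 : G → Submodule FF tU) (hgr : IsAlgGrading FF 𝒜)
    (S : NonUnitalSubalgebra F tU)
    (hShomog : S.toSubmodule = ⨆ g, S.toSubmodule ⊓ (𝒜 g).restrictScalars F)
    (hspan : Submodule.span FF (S : Set tU) = ⊤) :
    -- `M` is a homogeneous subalgebra of `M(Ũ)`
    ((multSubalgOn F FF S).toSubmodule ≤
        ((MultAlg FF (A := tU)).toSubmodule).restrictScalars F) ∧
    ((multSubalgOn F FF S).toSubmodule =
        ⨆ h : G, (multSubalgOn F FF S).toSubmodule ⊓ (endGrading FF 𝒜 h).restrictScalars F) ∧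
    -- `FF·M = M(Ũ)`
    (Submodule.span FF ((multSubalgOn F FF S : Set (Module.End FF tU))) =
        (MultAlg FF (A := tU)).toSubmodule) ∧
    -- every `m ∈ M` maps `U` into `U`, and restriction is an isomorphism of graded `F`-algebras
    -- `ψ : M → M(U)`
    (∀ m ∈ multSubalgOn F FF S, ∀ x ∈ S, m x ∈ S) ∧
    (∃ ψ : Module.End FF tU → Module.End F ↥S,
      -- `ψ` is restriction to `U`
      (∀ m ∈ multSubalgOn F FF S, ∀ x : ↥S, ((ψ m) x : tU) = m (x : tU)) ∧
      -- `ψ` is injective on `M`, additive and multiplicative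
      Set.InjOn ψ (multSubalgOn F FF S) ∧
      (∀ m ∈ multSubalgOn F FF S, ∀ m' ∈ multSubalgOn F FF S,
          ψ (m + m') = ψ m + ψ m' ∧ ψ (m * m') = ψ m * ψ m' ∧ ∀ c : F, ψ (c • m) = c • ψ m) ∧
      -- `ψ` maps `M` onto `M(U)`
      (ψ '' (multSubalgOn F FF S) = (MultAlg F (A := ↥S) : Set (Module.End F ↥S))) ∧
      -- `ψ` respects the gradings
      (∀ h : G,
        ψ '' ((multSubalgOn F FF S : Set (Module.End FF tU)) ∩
            ((endGrading FF 𝒜 h : Submodule FF (Module.End FF tU)) : Set (Module.End FF tU))) =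
          (MultAlg F (A := ↥S) : Set (Module.End F ↥S)) ∩
            {φ : Module.End F ↥S | ∀ g : G, ∀ x : ↥S, (x : tU) ∈ 𝒜 g →
              ((φ x : tU) ∈ 𝒜 (h * g))})) := by
  let M := multSubalgOn F FF S
  let ψ : Module.End FF tU → Module.End F S := Function.extend Subtype.val (multRestrict S) 0
  have ψ_coe (m : M) : ψ m = multRestrict S m := Subtype.val_injective.extend_apply _ _ m
  have image_ψ : ψ '' M = MultAlg F (A := S) := by
    rw [← range_multRestrict (FF := FF), NonUnitalAlgHom.coe_range, Set.image_eq_range]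
    exact congrArg Set.range (funext ψ_coe)
  refine ⟨fun m hm => (span_multSubalgOn hspan).le (Submodule.subset_span hm),
    multSubalgOn_eq_iSup_inf_endGrading hgr.2 hShomog, span_multSubalgOn hspan,
    fun m hm => map_mem_of_mem_multSubalgOn hm, ψ, fun m hm x => ?_, fun m hm n hn hmn => ?_,
    fun m hm n hn => ⟨?_, ?_, fun c => ?_⟩, image_ψ, fun h => ?_⟩
  · rw [ψ_coe ⟨m, hm⟩, coe_multRestrict_apply]
  · rw [ψ_coe ⟨m, hm⟩, ψ_coe ⟨n, hn⟩] at hmn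
    exact congrArg Subtype.val (multRestrict_injective hspan hmn)
  · rw [ψ_coe ⟨m, hm⟩, ψ_coe ⟨n, hn⟩, ← map_add, ← ψ_coe]; rfl
  · rw [ψ_coe ⟨m, hm⟩, ψ_coe ⟨n, hn⟩, ← map_mul, ← ψ_coe]; rfl
  · rw [ψ_coe ⟨m, hm⟩, ← map_smul, ← ψ_coe]; rfl
  · rw [← image_ψ, ← Set.image_inter_preimage]
    refine congrArg (ψ '' ·) (Set.ext fun m => and_congr_right fun hm => ?_)
    rw [Set.mem_preimage, ψ_coe ⟨m, hm⟩]
    exact mem_endGrading_iff_multRestrict hgr.1.submodule_iSupIndep hShomog hspan ⟨m, hm⟩ h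

end
end
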